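/- arXiv:2406.10194 — 9 statements merged into one kernel-verified Lean document; each statement's English description precedes it below -/
import Mathlib

section
/- Reduced-state approximation bound (inequality (2.6)). For each σ_B ∈ Ω_B with p(σ_B) > 0 let ψ^{σ_B} : Ω_A × Ω_C → ℂ be the unit vector ψ^{σ_B}(a,c) := ψ(a,σ_B,c)/sqrt(p(σ_B)), where p(σ_B) := Σ_{a,c} |ψ(a,σ_B,c)|²; let λ(σ_B) denote the largest eigenvalue of ρ_A(ψ^{σ_B}) and let φ̂(σ_B) : Ω_A → ℂ be a unit eigenvector of ρ_A(ψ^{σ_B}) for the eigenvalue λ(σ_B). Define ρ̂_A := Σ_{σ_B : p(σ_B)>0} p(σ_B)·|φ̂(σ_B)⟩⟨φ̂(σ_B)|, i.e. the matrix with entries Σ_{σ_B} p(σ_B)·φ̂(σ_B)(a)·conj(φ̂(σ_B)(a')). Then ‖ρ_A(ψ) − ρ̂_A‖₁ ≤ 2·Σ_{σ_B : p(σ_B)>0} p(σ_B)·(1 − λ(σ_B)). -/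
/-!
Statement 2 (inequality (2.6)): reduced-state approximation bound.
-/

open Complex

namespace Stmt2

variable {ΩA ΩB ΩC : Type*} [Fintype ΩA] [Fintype ΩB] [Fintype ΩC]
  [DecidableEq ΩA] [Nonempty ΩA] [Nonempty ΩB] [Nonempty ΩC]

/-- buffer marginal `p(σ_B)` -/
noncomputable def pB (ψ : ΩA × ΩB × ΩC → ℂ) (b : ΩB) : ℝ :=
  ∑ a : ΩA, ∑ c : ΩC, Complex.normSq (ψ (a, b, c))

/-- reduced density matrix on `A` of a vector on a bipartite index set `Ω_A × R`. -/
noncomputable def rhoA {R : Type*} [Fintype R] (χ : ΩA × R → ℂ) : Matrix ΩA ΩA ℂ :=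
  Matrix.of fun a a' => ∑ r : R, χ (a, r) * (starRingEnd ℂ) (χ (a', r))

/-- the normalized conditioned vector `ψ^{σ_B}`. -/
noncomputable def psib (ψ : ΩA × ΩB × ΩC → ℂ) (b : ΩB) (x : ΩA × ΩC) : ℂ :=
  ψ (x.1, b, x.2) / (Real.sqrt (pB ψ b) : ℂ)

/-- trace norm of a Hermitian matrix: sum of absolute values of eigenvalues. -/
noncomputable def trNorm {n : Type*} [Fintype n] [DecidableEq n] (M : Matrix n n ℂ) : ℝ :=
  if h : M.IsHermitian then ∑ i, |h.eigenvalues i| else 0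

open scoped ComplexOrder

theorem sum_quad_eq_trace {n : Type*} [Fintype n] [DecidableEq n] {M : Matrix n n ℂ}
    (h : M.IsHermitian) (P : Matrix n n ℂ) :
    ∑ i, star (h.eigenvectorBasis i).ofLp ⬝ᵥ (P.mulVec (h.eigenvectorBasis i).ofLp) = P.trace := by
  have h1 : P.trace = (star (h.eigenvectorUnitary : Matrix n n ℂ) * P *
      (h.eigenvectorUnitary : Matrix n n ℂ)).trace := by
    rw [Matrix.trace_mul_comm, ← mul_assoc, Matrix.mem_unitaryGroup_iff.mp h.eigenvectorUnitary.2,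
      one_mul]
  rw [h1, Matrix.trace]
  refine Finset.sum_congr rfl fun i _ => ?_
  rw [Matrix.diag_apply, mul_assoc, Matrix.mul_apply]
  simp [dotProduct, Matrix.mulVec, Matrix.mul_apply, Matrix.star_apply]

theorem trNorm_sub_le {n : Type*} [Fintype n] [DecidableEq n] (P Q : Matrix n n ℂ)
    (hP : P.PosSemidef) (hQ : Q.PosSemidef) :
    trNorm (P - Q) ≤ P.trace.re + Q.trace.re := by
  have h : (P - Q).IsHermitian := hP.1.sub hQ.1
  rw [trNorm, dif_pos h, ← sum_quad_eq_trace h P, ← sum_quad_eq_trace h Q, Complex.re_sum,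
    Complex.re_sum, ← Finset.sum_add_distrib]
  refine Finset.sum_le_sum fun i _ => ?_
  rw [h.eigenvalues_eq, Matrix.sub_mulVec, dotProduct_sub]
  have a := (Complex.le_def.mp (hP.dotProduct_mulVec_nonneg (h.eigenvectorBasis i).ofLp)).1
  have b := (Complex.le_def.mp (hQ.dotProduct_mulVec_nonneg (h.eigenvectorBasis i).ofLp)).1
  simp only [Complex.zero_re] at a b
  simp only [map_sub, RCLike.re_eq_complex_re]
  rw [abs_le]
  constructor <;> linarith

theorem rhoA_posSemidef {ΩA R : Type*} [Fintype ΩA] [Fintype R] (χ : ΩA × R → ℂ) :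
    (rhoA χ).PosSemidef := by
  have : rhoA χ = (Matrix.of fun a r => χ (a, r)) * (Matrix.of fun a r => χ (a, r)).conjTranspose := by
    ext a a'
    simp [rhoA, Matrix.mul_apply]
  rw [this]
  exact Matrix.posSemidef_self_mul_conjTranspose _

theorem deflate_posSemidef {n : Type*} [Fintype n] [DecidableEq n] (ρ : Matrix n n ℂ)
    (hρ : ρ.PosSemidef) (φ : n → ℂ) (l : ℝ) (hn : star φ ⬝ᵥ φ = 1)
    (he : ρ.mulVec φ = (l : ℂ) • φ) :
    (ρ - (l : ℂ) • Matrix.vecMulVec φ (star φ)).PosSemidef := by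
  set F := Matrix.vecMulVec φ (star φ) with hF
  have hFH : F.conjTranspose = F := by
    simp [hF, Matrix.conjTranspose_vecMulVec]
  have h1 : ρ * F = (l : ℂ) • F := by
    rw [hF, Matrix.mul_vecMulVec, he, Matrix.smul_vecMulVec]
  have h2 : F * ρ = (l : ℂ) • F := by
    have := congrArg Matrix.conjTranspose h1
    rw [Matrix.conjTranspose_mul, Matrix.conjTranspose_smul, hFH, hρ.1.eq] at this
    simpa using this
  have h3 : F * F = F := by
    rw [hF, Matrix.vecMulVec_mul_vecMulVec, hn, one_smul]
  have := hρ.conjTranspose_mul_mul_same (1 - F)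
  have e : (1 - F).conjTranspose * ρ * (1 - F) = ρ - (l : ℂ) • F := by
    rw [Matrix.conjTranspose_sub, hFH, Matrix.conjTranspose_one, sub_mul, one_mul, h2, mul_sub,
      mul_one, sub_mul, h1, smul_mul_assoc, h3]
    abel
  rwa [e] at this

theorem trace_rhoA_psib {ΩA ΩB ΩC : Type*} [Fintype ΩA] [Fintype ΩC]
    (ψ : ΩA × ΩB × ΩC → ℂ) (b : ΩB) (hb : 0 < pB ψ b) : (rhoA (psib ψ b)).trace = 1 := by
  have hs : ((Real.sqrt (pB ψ b) : ℝ) : ℂ) * (Real.sqrt (pB ψ b) : ℝ) = (pB ψ b : ℂ) := by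
    rw [← Complex.ofReal_mul, Real.mul_self_sqrt hb.le]
  have h0 : (pB ψ b : ℂ) ≠ 0 := by exact_mod_cast hb.ne'
  simp only [Matrix.trace, rhoA, psib, Matrix.diag_apply, Matrix.of_apply, map_div₀,
    Complex.conj_ofReal, div_mul_div_comm, hs, Complex.mul_conj, ← Finset.sum_div]
  rw [div_eq_one_iff_eq h0]
  simp [pB]

theorem rhoA_eq_sum {ΩA ΩB ΩC : Type*} [Fintype ΩA] [Fintype ΩB] [Fintype ΩC]
    (ψ : ΩA × ΩB × ΩC → ℂ) :
    (rhoA ψ : Matrix ΩA ΩA ℂ) = ∑ b, (pB ψ b : ℂ) • rhoA (psib ψ b) := by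
  ext a a'
  simp only [rhoA, Matrix.sum_apply, Matrix.smul_apply, Matrix.of_apply, Fintype.sum_prod_type,
    smul_eq_mul, Finset.mul_sum]
  refine Finset.sum_congr rfl fun b _ => Finset.sum_congr rfl fun c _ => ?_
  have hnn : 0 ≤ pB ψ b :=
    Finset.sum_nonneg fun _ _ => Finset.sum_nonneg fun _ _ => Complex.normSq_nonneg _
  have hs : ((Real.sqrt (pB ψ b) : ℝ) : ℂ) * (Real.sqrt (pB ψ b) : ℝ) = (pB ψ b : ℂ) := by
    rw [← Complex.ofReal_mul, Real.mul_self_sqrt hnn]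
  simp only [psib, map_div₀, Complex.conj_ofReal, div_mul_div_comm, hs]
  by_cases hb : pB ψ b = 0
  · have : ψ (a, b, c) = 0 := by
      have h1 := (Finset.sum_eq_zero_iff_of_nonneg (fun _ _ => Finset.sum_nonneg
        fun _ _ => Complex.normSq_nonneg _)).mp hb a (Finset.mem_univ _)
      have h2 := (Finset.sum_eq_zero_iff_of_nonneg (fun _ _ => Complex.normSq_nonneg _)).mp h1 c
        (Finset.mem_univ _)
      exact Complex.normSq_eq_zero.mp h2
    simp [this]
  · have h0 : (pB ψ b : ℂ) ≠ 0 := by exact_mod_cast hb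
    field_simp

/-- **Inequality (2.6)**: `λ b` is the largest eigenvalue of `ρ_A(ψ^{σ_B})`,
with unit eigenvector `φ̂(σ_B)`; the maximality of `λ b` is expressed by the
Rayleigh-quotient bound. The sums over `σ_B` may be taken unrestricted since all
terms corresponding to `p(σ_B) = 0` carry the factor `p(σ_B)`. -/
theorem reduced_state_approx (ψ : ΩA × ΩB × ΩC → ℂ)
    (hψ : ∑ σ : ΩA × ΩB × ΩC, Complex.normSq (ψ σ) = 1)
    (lam : ΩB → ℝ) (phihat : ΩB → ΩA → ℂ)
    (hev : ∀ b : ΩB, 0 < pB ψ b →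
      (∑ a : ΩA, Complex.normSq (phihat b a) = 1) ∧
      (rhoA (psib ψ b)).mulVec (phihat b) = (lam b : ℂ) • phihat b ∧
      ∀ v : ΩA → ℂ,
        (∑ a : ΩA, ∑ a' : ΩA, (starRingEnd ℂ) (v a) * rhoA (psib ψ b) a a' * v a').re
          ≤ lam b * ∑ a : ΩA, Complex.normSq (v a)) :
    trNorm ((rhoA ψ : Matrix ΩA ΩA ℂ) -
        Matrix.of fun a a' =>
          ∑ b : ΩB, (pB ψ b : ℂ) * (phihat b a * (starRingEnd ℂ) (phihat b a')))
      ≤ 2 * ∑ b : ΩB, pB ψ b * (1 - lam b) := by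
  have hnn : ∀ b, 0 ≤ pB ψ b := fun b =>
    Finset.sum_nonneg fun _ _ => Finset.sum_nonneg fun _ _ => Complex.normSq_nonneg _
  set F : ΩB → Matrix ΩA ΩA ℂ := fun b => Matrix.vecMulVec (phihat b) (star (phihat b)) with hF
  have hn : ∀ b, 0 < pB ψ b → star (phihat b) ⬝ᵥ phihat b = 1 := by
    intro b hb
    have := congrArg (fun x : ℝ => (x : ℂ)) (hev b hb).1
    simp only [Complex.ofReal_sum, Complex.normSq_eq_conj_mul_self, Complex.ofReal_one] at this
    simpa [dotProduct] using this
  have htF : ∀ b, 0 < pB ψ b → (F b).trace = 1 := by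
    intro b hb
    rw [hF, Matrix.trace_vecMulVec, dotProduct_comm, hn b hb]
  have hD : ∀ b, 0 < pB ψ b → (rhoA (psib ψ b) - (lam b : ℂ) • F b).PosSemidef := fun b hb =>
    deflate_posSemidef _ (rhoA_posSemidef _) _ _ (hn b hb) (hev b hb).2.1
  have htD : ∀ b, 0 < pB ψ b →
      (rhoA (psib ψ b) - (lam b : ℂ) • F b).trace = ((1 - lam b : ℝ) : ℂ) := by
    intro b hb
    rw [Matrix.trace_sub, Matrix.trace_smul, htF b hb, trace_rhoA_psib ψ b hb]
    simp
  have hl : ∀ b, 0 < pB ψ b → 0 ≤ 1 - lam b := by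
    intro b hb
    have := (hD b hb).trace_nonneg
    rw [htD b hb] at this
    exact_mod_cast this
  set P : Matrix ΩA ΩA ℂ := ∑ b, (pB ψ b : ℂ) • (rhoA (psib ψ b) - (lam b : ℂ) • F b) with hP
  set Q : Matrix ΩA ΩA ℂ := ∑ b, (pB ψ b : ℂ) • (((1 - lam b : ℝ) : ℂ) • F b) with hQ
  have hPp : P.PosSemidef := by
    refine Matrix.posSemidef_sum _ fun b _ => ?_
    rcases (hnn b).eq_or_lt with h | h
    · rw [← h]; simpa using Matrix.PosSemidef.zero
    · exact (hD b h).smul (by exact_mod_cast h.le)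
  have hQp : Q.PosSemidef := by
    refine Matrix.posSemidef_sum _ fun b _ => ?_
    rcases (hnn b).eq_or_lt with h | h
    · rw [← h]; simpa using Matrix.PosSemidef.zero
    · exact ((Matrix.posSemidef_vecMulVec_self_star _).smul
        (by exact_mod_cast hl b h)).smul (by exact_mod_cast h.le)
  have htP : P.trace.re = ∑ b, pB ψ b * (1 - lam b) := by
    rw [hP, Matrix.trace_sum, Complex.re_sum]
    refine Finset.sum_congr rfl fun b _ => ?_
    rcases (hnn b).eq_or_lt with h | h
    · rw [← h]; simp
    · rw [Matrix.trace_smul, htD b h, smul_eq_mul, ← Complex.ofReal_mul, Complex.ofReal_re]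
  have htQ : Q.trace.re = ∑ b, pB ψ b * (1 - lam b) := by
    rw [hQ, Matrix.trace_sum, Complex.re_sum]
    refine Finset.sum_congr rfl fun b _ => ?_
    rcases (hnn b).eq_or_lt with h | h
    · rw [← h]; simp
    · rw [Matrix.trace_smul, Matrix.trace_smul, htF b h, smul_eq_mul, smul_eq_mul, mul_one,
        ← Complex.ofReal_mul, Complex.ofReal_re]
  have hM : (rhoA ψ : Matrix ΩA ΩA ℂ) - (Matrix.of fun a a' =>
      ∑ b : ΩB, (pB ψ b : ℂ) * (phihat b a * (starRingEnd ℂ) (phihat b a'))) = P - Q := by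
    rw [rhoA_eq_sum, hP, hQ, ← Finset.sum_sub_distrib]
    ext a a'
    simp only [Matrix.sub_apply, Matrix.sum_apply, Matrix.smul_apply, Matrix.of_apply, hF,
      Matrix.vecMulVec_apply, smul_eq_mul, Pi.star_apply]
    rw [← Finset.sum_sub_distrib]
    refine Finset.sum_congr rfl fun b _ => ?_
    push_cast
    simp only [starRingEnd_apply]
    ring
  rw [hM]
  have := trNorm_sub_le P Q hPp hQp
  rw [htP, htQ] at this
  linarith

end Stmt2
end

section
/- Probabilistic half of the fidelity bound (first estimate in the proof of Theorem 3.1). Let p be a probability mass function on Ω_A × Ω_B × Ω_C. Then | Σ_{(σ_A,σ_B,σ_C) : p(σ_B,σ_C)>0} p(σ_B,σ_C) · sqrt(p(σ_A|σ_B,σ_C)) · ( sqrt(p(σ_A|σ_B,σ_C)) − sqrt(p(σ_A|σ_B)) ) | ≤ TV_B(A|C). -/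
/-!
Statement 3: probabilistic half of the fidelity bound (proof of Theorem 3.1).
-/

open scoped Classical

namespace Stmt3

variable {ΩA ΩB ΩC : Type*} [Fintype ΩA] [Fintype ΩB] [Fintype ΩC]
  [Nonempty ΩA] [Nonempty ΩB] [Nonempty ΩC]

/-- marginal `p(σ_B)` -/
noncomputable def pB (p : ΩA × ΩB × ΩC → ℝ) (b : ΩB) : ℝ :=
  ∑ a : ΩA, ∑ c : ΩC, p (a, b, c)

/-- marginal `p(σ_B, σ_C)` -/
noncomputable def pBC (p : ΩA × ΩB × ΩC → ℝ) (b : ΩB) (c : ΩC) : ℝ :=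
  ∑ a : ΩA, p (a, b, c)

/-- marginal `p(σ_A, σ_B)` -/
noncomputable def pAB (p : ΩA × ΩB × ΩC → ℝ) (a : ΩA) (b : ΩB) : ℝ :=
  ∑ c : ΩC, p (a, b, c)

/-- conditional probability `p(σ_A | σ_B)` (convention `x/0 = 0`). -/
noncomputable def condAB (p : ΩA × ΩB × ΩC → ℝ) (a : ΩA) (b : ΩB) : ℝ :=
  pAB p a b / pB p b

/-- conditional probability `p(σ_A | σ_B, σ_C)` -/
noncomputable def condABC (p : ΩA × ΩB × ΩC → ℝ) (a : ΩA) (b : ΩB) (c : ΩC) : ℝ :=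
  p (a, b, c) / pBC p b c

/-- `TV_B(A|C)` -/
noncomputable def TVB (p : ΩA × ΩB × ΩC → ℝ) : ℝ :=
  ∑ b : ΩB, ∑ c : ΩC, pBC p b c *
    ∑ a : ΩA, max (condABC p a b c - condAB p a b) 0

/-- **First estimate in the proof of Theorem 3.1**. -/
theorem prob_half_fidelity (p : ΩA × ΩB × ΩC → ℝ)
    (hp0 : ∀ σ, 0 ≤ p σ) (hp1 : ∑ σ : ΩA × ΩB × ΩC, p σ = 1) :
    |∑ b : ΩB, ∑ c : ΩC, ∑ a : ΩA,
        (if 0 < pBC p b c then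
          pBC p b c * Real.sqrt (condABC p a b c) *
            (Real.sqrt (condABC p a b c) - Real.sqrt (condAB p a b))
        else 0)|
      ≤ TVB p := by
  have key1 : ∀ x y : ℝ, 0 ≤ x → 0 ≤ y →
      √x * (√x - √y) ≤ max (x - y) 0 := by
    intro x y hx hy
    have h1 := Real.sq_sqrt hx
    have h2 := Real.sq_sqrt hy
    have h3 := Real.sqrt_nonneg x
    have h4 := Real.sqrt_nonneg y
    rcases le_total (√x) (√y) with h | h
    · exact le_trans (mul_nonpos_of_nonneg_of_nonpos h3 (by linarith)) (le_max_right _ _)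
    · refine le_trans ?_ (le_max_left _ _)
      nlinarith [mul_nonneg h4 (sub_nonneg.2 h)]
  have key2 : ∀ x y : ℝ, 0 ≤ x → 0 ≤ y →
      (x - y) / 2 ≤ √x * (√x - √y) := by
    intro x y hx hy
    have h1 := Real.sq_sqrt hx
    have h2 := Real.sq_sqrt hy
    nlinarith [sq_nonneg (√x - √y)]
  have hBC0 : ∀ b c, 0 ≤ pBC p b c := fun b c => Finset.sum_nonneg fun a _ => hp0 _
  have hAB0 : ∀ a b, 0 ≤ pAB p a b := fun a b => Finset.sum_nonneg fun c _ => hp0 _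
  have hB0 : ∀ b, 0 ≤ pB p b := fun b =>
    Finset.sum_nonneg fun a _ => Finset.sum_nonneg fun c _ => hp0 _
  have hx0 : ∀ a b c, 0 ≤ condABC p a b c := fun a b c => div_nonneg (hp0 _) (hBC0 b c)
  have hy0 : ∀ a b, 0 ≤ condAB p a b := fun a b => div_nonneg (hAB0 a b) (hB0 b)
  have hterm : ∀ b c,
      0 ≤ (∑ a : ΩA, (if 0 < pBC p b c then
          pBC p b c * Real.sqrt (condABC p a b c) *
            (Real.sqrt (condABC p a b c) - Real.sqrt (condAB p a b))
        else 0)) ∧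
      (∑ a : ΩA, (if 0 < pBC p b c then
          pBC p b c * Real.sqrt (condABC p a b c) *
            (Real.sqrt (condABC p a b c) - Real.sqrt (condAB p a b))
        else 0)) ≤ pBC p b c * ∑ a : ΩA, max (condABC p a b c - condAB p a b) 0 := by
    intro b c
    by_cases hpos : 0 < pBC p b c
    · simp only [hpos, if_true, mul_assoc]
      rw [← Finset.mul_sum]
      refine ⟨mul_nonneg hpos.le ?_, mul_le_mul_of_nonneg_left
        (Finset.sum_le_sum fun a _ => key1 _ _ (hx0 a b c) (hy0 a b)) hpos.le⟩
      have hBpos : 0 < pB p b := by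
        refine lt_of_lt_of_le hpos ?_
        unfold pBC pB
        exact Finset.sum_le_sum fun a _ =>
          Finset.single_le_sum (f := fun c => p (a, b, c)) (fun c _ => hp0 _) (Finset.mem_univ c)
      have hsx : ∑ a, condABC p a b c = 1 := by
        unfold condABC
        rw [← Finset.sum_div]
        exact div_self hpos.ne'
      have hsy : ∑ a, condAB p a b = 1 := by
        unfold condAB
        rw [← Finset.sum_div]
        exact div_self hBpos.ne'
      have h0 : ∑ a, (condABC p a b c - condAB p a b) / 2 = 0 := by
        rw [← Finset.sum_div, Finset.sum_sub_distrib, hsx, hsy]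
        norm_num
      rw [← h0]
      exact Finset.sum_le_sum fun a _ => key2 _ _ (hx0 a b c) (hy0 a b)
    · simp only [hpos, if_false, Finset.sum_const_zero, le_refl, true_and]
      exact mul_nonneg (hBC0 b c) (Finset.sum_nonneg fun a _ => le_max_right _ _)
  rw [abs_of_nonneg (Finset.sum_nonneg fun b _ => Finset.sum_nonneg fun c _ => (hterm b c).1)]
  exact Finset.sum_le_sum fun b _ => Finset.sum_le_sum fun c _ => (hterm b c).2

end Stmt3
end

section
/- Spectral tail bound (Lemma of Section 4, inequality (4.5)). Let λ₁ ≥ λ₂ ≥ … ≥ λ_{|Ω_A|} be the eigenvalues of ρ_A(ψ) in decreasing order (with multiplicity), and for N ∈ ℕ define τ(N) := Σ_{j > N} λ_j. Then τ(|Ω_B|) ≤ 2·TV_B(A|C) + 2·ϑ_B(A|C). -/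
/-!
Statement 5 (Lemma of Section 4, inequality (4.5)): spectral tail bound.
-/

open Complex

namespace Stmt5

variable {ΩA ΩB ΩC : Type*} [Fintype ΩA] [Fintype ΩB] [Fintype ΩC]
  [DecidableEq ΩA] [Nonempty ΩA] [Nonempty ΩB] [Nonempty ΩC]

noncomputable def prob (ψ : ΩA × ΩB × ΩC → ℂ) (σ : ΩA × ΩB × ΩC) : ℝ :=
  Complex.normSq (ψ σ)

noncomputable def pB (ψ : ΩA × ΩB × ΩC → ℂ) (b : ΩB) : ℝ :=
  ∑ a : ΩA, ∑ c : ΩC, prob ψ (a, b, c)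

noncomputable def pBC (ψ : ΩA × ΩB × ΩC → ℂ) (b : ΩB) (c : ΩC) : ℝ :=
  ∑ a : ΩA, prob ψ (a, b, c)

noncomputable def pAB (ψ : ΩA × ΩB × ΩC → ℂ) (a : ΩA) (b : ΩB) : ℝ :=
  ∑ c : ΩC, prob ψ (a, b, c)

noncomputable def condAB (ψ : ΩA × ΩB × ΩC → ℂ) (a : ΩA) (b : ΩB) : ℝ :=
  pAB ψ a b / pB ψ b

noncomputable def condABC (ψ : ΩA × ΩB × ΩC → ℂ) (a : ΩA) (b : ΩB) (c : ΩC) : ℝ :=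
  prob ψ (a, b, c) / pBC ψ b c

/-- `TV_B(A|C)` -/
noncomputable def TVB (ψ : ΩA × ΩB × ΩC → ℂ) : ℝ :=
  ∑ b : ΩB, ∑ c : ΩC, pBC ψ b c *
    ∑ a : ΩA, max (condABC ψ a b c - condAB ψ a b) 0

noncomputable def varthetaAG (ψ : ΩA × ΩB × ΩC → ℂ)
    (α : ΩA × ΩB → ℝ) (γ : ΩC × ΩB → ℝ) : ℝ :=
  Real.sqrt (∑ σ : ΩA × ΩB × ΩC, prob ψ σ *
    Complex.normSq (1 - Complex.exp (Complex.I *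
      ((α (σ.1, σ.2.1) + γ (σ.2.2, σ.2.1) - Complex.arg (ψ σ) : ℝ) : ℂ))))

/-- `ϑ_B(A|C)` -/
noncomputable def vartheta (ψ : ΩA × ΩB × ΩC → ℂ) : ℝ :=
  ⨅ (α : ΩA × ΩB → ℝ) (γ : ΩC × ΩB → ℝ), varthetaAG ψ α γ

/-- reduced density matrix on `A` -/
noncomputable def rhoA (ψ : ΩA × ΩB × ΩC → ℂ) : Matrix ΩA ΩA ℂ :=
  Matrix.of fun a a' => ∑ b : ΩB, ∑ c : ΩC, ψ (a, b, c) * (starRingEnd ℂ) (ψ (a', b, c))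

open scoped InnerProductSpace

lemma quad {H n ι : Type*} [NormedAddCommGroup H] [InnerProductSpace ℂ H] [Fintype n] [Fintype ι]
    (u : OrthonormalBasis n ℂ H) (lam : n → ℝ) (m : ι → H)
    (hT : ∀ j, ∑ i, ⟪m i, u j⟫_ℂ • m i = (lam j : ℂ) • u j) (x : H) :
    ∑ i, ‖⟪m i, x⟫_ℂ‖ ^ 2 = ∑ j, lam j * ‖⟪u j, x⟫_ℂ‖ ^ 2 := by
  have key : ∀ y : H, ((‖⟪y, x⟫_ℂ‖ ^ 2 : ℝ) : ℂ) = ⟪x, y⟫_ℂ * ⟪y, x⟫_ℂ := by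
    intro y
    rw [← inner_conj_symm x y, Complex.conj_mul']
    push_cast; rfl
  have : ((∑ i, ‖⟪m i, x⟫_ℂ‖ ^ 2 : ℝ) : ℂ) = ((∑ j, lam j * ‖⟪u j, x⟫_ℂ‖ ^ 2 : ℝ) : ℂ) := by
    rw [Complex.ofReal_sum, Complex.ofReal_sum]
    simp_rw [Complex.ofReal_mul, key]
    have h1 : ∀ j, (lam j : ℂ) * (⟪x, u j⟫_ℂ * ⟪u j, x⟫_ℂ) =
        ∑ i, ⟪x, m i⟫_ℂ * (⟪m i, u j⟫_ℂ * ⟪u j, x⟫_ℂ) := by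
      intro j
      have := congrArg (fun y => ⟪x, y⟫_ℂ) (hT j)
      simp only [inner_sum, inner_smul_right] at this
      rw [← mul_assoc, ← this, Finset.sum_mul]
      exact Finset.sum_congr rfl fun i _ => by ring
    simp_rw [h1]
    rw [Finset.sum_comm]
    refine Finset.sum_congr rfl fun i _ => ?_
    rw [← Finset.mul_sum, u.sum_inner_mul_inner]
  exact_mod_cast this

lemma tail_sum (d N : ℕ) (lam x : Fin d → ℝ) (hlam : ∀ i j, i ≤ j → lam j ≤ lam i)
    (h0 : ∀ i, 0 ≤ lam i) (hx0 : ∀ i, 0 ≤ x i) (hx1 : ∀ i, x i ≤ 1) (hs : ∑ i, x i ≤ N) :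
    ∑ j ∈ Finset.univ.filter (fun j : Fin d => N ≤ (j : ℕ)), lam j
      ≤ ∑ j, lam j - ∑ j, lam j * x j := by
  rw [← Finset.sum_sub_distrib]
  rcases Nat.lt_or_ge N d with hN | hN
  · set t := lam ⟨N, hN⟩
    have hc : (∑ j : Fin d, if (j : ℕ) < N then (1 : ℝ) else 0) = N := by
      rw [Finset.sum_boole]
      congr 1
      have := Fin.card_filter_val_lt (n := d) (m := N)
      simpa [min_eq_right hN.le] using this
    have ht : 0 ≤ t := h0 _
    have : ∑ j : Fin d, (if N ≤ (j : ℕ) then lam j else 0) ≤ 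
       ∑ j : Fin d, ((lam j - lam j * x j) + t * (x j - if (j : ℕ) < N then (1 : ℝ) else 0)) := by
      refine Finset.sum_le_sum fun j _ => ?_
      by_cases hj : N ≤ (j : ℕ)
      · have h1 : lam j ≤ t := hlam ⟨N, hN⟩ j hj
        rw [if_pos hj, if_neg (by omega)]
        nlinarith [hx0 j]
      · have h1 : t ≤ lam j := hlam j ⟨N, hN⟩ (by simp [Fin.le_def]; omega)
        rw [if_neg hj, if_pos (by omega)]
        nlinarith [hx1 j]
    rw [Finset.sum_filter]
    rw [Finset.sum_add_distrib, ← Finset.mul_sum, Finset.sum_sub_distrib (fun j => x j), hc] at this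
    nlinarith
  · rw [Finset.sum_eq_zero]
    · exact Finset.sum_nonneg fun j _ => by nlinarith [h0 j, hx1 j]
    · intro j hj
      have := (Finset.mem_filter.1 hj).2
      omega

lemma eckart {H ι : Type*} [NormedAddCommGroup H] [InnerProductSpace ℂ H] [FiniteDimensional ℂ H]
    [Fintype ι] (d N : ℕ)
    (u : OrthonormalBasis (Fin d) ℂ H) (lam : Fin d → ℝ) (m f : ι → H)
    (hT : ∀ j, ∑ i, ⟪m i, u j⟫_ℂ • m i = (lam j : ℂ) • u j)
    (hlam : ∀ i j, i ≤ j → lam j ≤ lam i)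
    (V : Submodule ℂ H) (hV : Module.finrank ℂ V ≤ N) (hf : ∀ i, f i ∈ V) :
    ∑ j ∈ Finset.univ.filter (fun j : Fin d => N ≤ (j : ℕ)), lam j ≤ ∑ i, ‖m i - f i‖ ^ 2 := by
  let w := stdOrthonormalBasis ℂ V
  have how : Orthonormal ℂ (fun k => (w k : H)) :=
    w.orthonormal.comp_linearIsometry V.subtypeₗᵢ
  have hq := quad u lam m hT
  have hlam_eq : ∀ j, lam j = ∑ i, ‖⟪m i, u j⟫_ℂ‖ ^ 2 := by
    intro j
    rw [hq, Finset.sum_eq_single j]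
    · simp
    · intro k _ hk
      rw [u.orthonormal.2 hk]; simp
    · simp
  have h0 : ∀ j, 0 ≤ lam j := fun j => by rw [hlam_eq]; positivity
  have hpars : ∀ y : H, ∑ j, ‖⟪u j, y⟫_ℂ‖ ^ 2 = ‖y‖ ^ 2 := fun y => u.sum_sq_norm_inner_right y
  have htot : ∑ j, lam j = ∑ i, ‖m i‖ ^ 2 := by
    simp_rw [hlam_eq, ← hpars (m _)]
    rw [Finset.sum_comm]
    simp_rw [norm_inner_symm]
  let x : Fin d → ℝ := fun j => ∑ k, ‖⟪(w k : H), u j⟫_ℂ‖ ^ 2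
  have hx1 : ∀ j, x j ≤ 1 := fun j => by
    have := how.sum_inner_products_le (u j) (s := Finset.univ)
    simpa using this
  have hxs : ∑ j, x j ≤ N := by
    have : ∑ j, x j = Module.finrank ℂ V := by
      simp only [x]
      rw [Finset.sum_comm]
      simp_rw [norm_inner_symm (w _ : H), hpars]
      simp [how.1]
    rw [this]; exact_mod_cast hV
  refine (tail_sum d N lam x hlam h0 (fun j => by positivity) hx1 hxs).trans ?_
  have hlx : ∑ j, lam j * x j = ∑ i, ∑ k, ‖⟪(w k : H), m i⟫_ℂ‖ ^ 2 := by
    simp only [x, Finset.mul_sum]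
    rw [Finset.sum_comm, Finset.sum_comm (γ := ι)]
    refine Finset.sum_congr rfl fun k _ => ?_
    simp_rw [norm_inner_symm (w k : H), hq]
  rw [htot, hlx, ← Finset.sum_sub_distrib]
  refine Finset.sum_le_sum fun i _ => ?_
  have hP := Submodule.norm_sq_eq_add_norm_sq_projection (m i - f i) V
  have hQ := Submodule.norm_sq_eq_add_norm_sq_projection (m i) V
  have e1 : Vᗮ.orthogonalProjectionOnto (m i - f i) = Vᗮ.orthogonalProjectionOnto (m i) := by
    rw [map_sub, Submodule.orthogonalProjectionOnto_orthogonal_apply_eq_zero (hf i), sub_zero]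
  have e2 : ∑ k, ‖⟪(w k : H), m i⟫_ℂ‖ ^ 2 = ‖V.orthogonalProjectionOnto (m i)‖ ^ 2 := by
    rw [← w.sum_sq_norm_inner_right]
    refine Finset.sum_congr rfl fun k _ => ?_
    rw [Submodule.inner_orthogonalProjectionOnto_eq_of_mem_left]
  rw [e1] at hP
  rw [e2]
  nlinarith [sq_nonneg ‖V.orthogonalProjectionOnto (m i - f i)‖]

lemma pointwise (ps : ℂ) (q t : ℝ) (hq : 0 ≤ q) :
    ‖ps - (Real.sqrt q : ℂ) * Complex.exp (Complex.I * (t : ℂ))‖ ^ 2 ≤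
      (2 * max (Complex.normSq ps - q) 0 - (Complex.normSq ps - q)) +
      2 * (Real.sqrt q * (‖ps‖ *
        ‖1 - Complex.exp (Complex.I * ((t - Complex.arg ps : ℝ) : ℂ))‖)) := by
  set s := Real.sqrt q with hs
  have hs0 : 0 ≤ s := Real.sqrt_nonneg q
  have hsq : s ^ 2 = q := Real.sq_sqrt hq
  set r := ‖ps‖ with hr
  have hr0 : 0 ≤ r := norm_nonneg _
  set z := Complex.exp (Complex.I * ((t - Complex.arg ps : ℝ) : ℂ)) with hz
  have hz1 : ‖z‖ = 1 := by
    rw [hz, mul_comm]; exact Complex.norm_exp_ofReal_mul_I _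
  have hps : ps = r * Complex.exp (Complex.I * (Complex.arg ps : ℂ)) := by
    rw [mul_comm Complex.I]; exact (Complex.norm_mul_exp_arg_mul_I ps).symm
  have hfac : ps - (s : ℂ) * Complex.exp (Complex.I * (t : ℂ)) =
      Complex.exp (Complex.I * (Complex.arg ps : ℂ)) * ((r : ℂ) - s * z) := by
    have h2 : Complex.exp (Complex.I * (t : ℂ)) =
        Complex.exp (Complex.I * (Complex.arg ps : ℂ)) * z := by
      rw [hz, ← Complex.exp_add]; congr 1; push_cast; ring
    rw [h2]
    nth_rewrite 1 [hps]
    ring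
  have hn1 : ‖Complex.exp (Complex.I * (Complex.arg ps : ℂ))‖ = 1 := by
    rw [mul_comm]; exact Complex.norm_exp_ofReal_mul_I _
  rw [hfac, norm_mul, hn1, one_mul]
  have hnz : z.re ^ 2 + z.im ^ 2 = 1 := by
    have : ‖z‖ ^ 2 = 1 := by rw [hz1]; norm_num
    rw [← Complex.normSq_eq_norm_sq, Complex.normSq_apply] at this
    linarith
  have h1 : ‖(r : ℂ) - s * z‖ ^ 2 = (r - s) ^ 2 + r * s * ‖1 - z‖ ^ 2 := by
    rw [← Complex.normSq_eq_norm_sq, ← Complex.normSq_eq_norm_sq, Complex.normSq_apply,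
      Complex.normSq_apply]
    simp
    linear_combination (s ^ 2 - r * s) * hnz
  have h2 : ‖1 - z‖ ≤ 2 := by
    refine (norm_sub_le _ _).trans ?_
    rw [hz1, norm_one]; norm_num
  have h3 : r * s * ‖1 - z‖ ^ 2 ≤ 2 * (s * (r * ‖1 - z‖)) := by
    have : 0 ≤ r * s * ‖1 - z‖ := by positivity
    nlinarith
  have h4 : Complex.normSq ps = r ^ 2 := Complex.normSq_eq_norm_sq ps
  have h5 : (r - s) ^ 2 ≤ 2 * max (r ^ 2 - q) 0 - (r ^ 2 - q) := by
    rw [← hsq]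
    rcases le_total r s with h | h
    · nlinarith [le_max_right (r ^ 2 - s ^ 2) 0]
    · nlinarith [le_max_left (r ^ 2 - s ^ 2) 0]
  rw [h1, h4]
  linarith

lemma pB_eq (ψ : ΩA × ΩB × ΩC → ℂ) (b : ΩB) : pB ψ b = ∑ c, pBC ψ b c := by
  unfold pB pBC
  exact Finset.sum_comm

lemma prob_nonneg (ψ : ΩA × ΩB × ΩC → ℂ) (σ) : 0 ≤ prob ψ σ := Complex.normSq_nonneg _

lemma pBC_nonneg (ψ : ΩA × ΩB × ΩC → ℂ) (b : ΩB) (c : ΩC) : 0 ≤ pBC ψ b c :=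
  Finset.sum_nonneg fun _ _ => prob_nonneg ψ _

lemma condAB_nonneg (ψ : ΩA × ΩB × ΩC → ℂ) (a : ΩA) (b : ΩB) : 0 ≤ condAB ψ a b :=
  div_nonneg (Finset.sum_nonneg fun _ _ => prob_nonneg ψ _)
    (Finset.sum_nonneg fun _ _ => Finset.sum_nonneg fun _ _ => prob_nonneg ψ _)

lemma sum_q (ψ : ΩA × ΩB × ΩC → ℂ) (b : ΩB) (c : ΩC) :
    ∑ a, pBC ψ b c * condAB ψ a b = pBC ψ b c := by
  rw [← Finset.mul_sum]
  by_cases h : pB ψ b = 0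
  · have : pBC ψ b c = 0 := by
      rw [pB_eq] at h
      exact (Finset.sum_eq_zero_iff_of_nonneg fun c _ => pBC_nonneg ψ b c).1 h c
        (Finset.mem_univ c)
    rw [this, zero_mul]
  · have : ∑ a, condAB ψ a b = 1 := by
      unfold condAB
      rw [← Finset.sum_div]
      exact div_self h
    rw [this, mul_one]

lemma TVB_eq (ψ : ΩA × ΩB × ΩC → ℂ) :
    TVB ψ = ∑ b, ∑ c, ∑ a, max (prob ψ (a, b, c) - pBC ψ b c * condAB ψ a b) 0 := by
  unfold TVB
  refine Finset.sum_congr rfl fun b _ => Finset.sum_congr rfl fun c _ => ?_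
  rw [Finset.mul_sum]
  refine Finset.sum_congr rfl fun a _ => ?_
  rw [mul_max_of_nonneg _ _ (pBC_nonneg ψ b c), mul_zero, mul_sub]
  have : pBC ψ b c * condABC ψ a b c = prob ψ (a, b, c) := by
    unfold condABC
    by_cases h : pBC ψ b c = 0
    · have h2 : prob ψ (a, b, c) = 0 :=
        (Finset.sum_eq_zero_iff_of_nonneg fun a _ => prob_nonneg ψ (a, b, c)).1 h a
          (Finset.mem_univ a)
      rw [h, h2]; simp
    · field_simp
  rw [this]

lemma sum_reorder (g : ΩA × ΩB × ΩC → ℝ) :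
    ∑ b, ∑ c, ∑ a, g (a, b, c) = ∑ σ, g σ := by
  rw [Fintype.sum_prod_type_right, Fintype.sum_prod_type]

lemma analytic_bound (ψ : ΩA × ΩB × ΩC → ℂ) (hψ : ∑ σ, Complex.normSq (ψ σ) = 1)
    (α : ΩA × ΩB → ℝ) (γ : ΩC × ΩB → ℝ) :
    ∑ σ : ΩA × ΩB × ΩC, ‖ψ σ - (Real.sqrt (pBC ψ σ.2.1 σ.2.2 * condAB ψ σ.1 σ.2.1) : ℂ) *
      Complex.exp (Complex.I * ((α (σ.1, σ.2.1) + γ (σ.2.2, σ.2.1) : ℝ) : ℂ))‖ ^ 2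
      ≤ 2 * TVB ψ + 2 * varthetaAG ψ α γ := by
  set q : ΩA × ΩB × ΩC → ℝ := fun σ => pBC ψ σ.2.1 σ.2.2 * condAB ψ σ.1 σ.2.1 with hq
  have hq0 : ∀ σ, 0 ≤ q σ := fun σ => mul_nonneg (pBC_nonneg ψ _ _) (condAB_nonneg ψ _ _)
  have hqs : ∑ σ, q σ = 1 := by
    rw [← sum_reorder, ← hψ, ← sum_reorder]
    refine Finset.sum_congr rfl fun b _ => Finset.sum_congr rfl fun c _ => ?_
    exact sum_q ψ b c
  have hTV : TVB ψ = ∑ σ, max (Complex.normSq (ψ σ) - q σ) 0 := by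
    rw [TVB_eq, ← sum_reorder]; rfl
  refine (Finset.sum_le_sum fun σ _ => pointwise (ψ σ) (q σ) _ (hq0 σ)).trans ?_
  rw [Finset.sum_add_distrib, Finset.sum_sub_distrib, ← Finset.mul_sum, ← Finset.mul_sum,
    Finset.sum_sub_distrib, hψ, hqs, ← hTV]
  have hCS := Real.sum_mul_le_sqrt_mul_sqrt Finset.univ (fun σ => Real.sqrt (q σ))
    (fun σ => ‖ψ σ‖ * ‖1 - Complex.exp (Complex.I *
      ((α (σ.1, σ.2.1) + γ (σ.2.2, σ.2.1) - Complex.arg (ψ σ) : ℝ) : ℂ))‖)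
  simp_rw [Real.sq_sqrt (hq0 _), hqs, Real.sqrt_one, one_mul, mul_pow,
    ← Complex.normSq_eq_norm_sq] at hCS
  have : varthetaAG ψ α γ = Real.sqrt (∑ σ, Complex.normSq (ψ σ) * Complex.normSq
    (1 - Complex.exp (Complex.I *
      ((α (σ.1, σ.2.1) + γ (σ.2.2, σ.2.1) - Complex.arg (ψ σ) : ℝ) : ℂ)))) := rfl
  rw [this]
  linarith

/-- **Inequality (4.5)**: the eigenvalues of `ρ_A(ψ)` are enumerated in
decreasing order by `e : Fin |Ω_A| ≃ Ω_A`; the tail beyond the `|Ω_B|` largest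
eigenvalues is bounded by `2·TV_B(A|C) + 2·ϑ_B(A|C)`. -/
theorem spectral_tail_bound (ψ : ΩA × ΩB × ΩC → ℂ)
    (hψ : ∑ σ : ΩA × ΩB × ΩC, Complex.normSq (ψ σ) = 1)
    (hH : (rhoA ψ).IsHermitian)
    (e : Fin (Fintype.card ΩA) ≃ ΩA)
    (hsort : ∀ i j : Fin (Fintype.card ΩA), i ≤ j →
      hH.eigenvalues (e j) ≤ hH.eigenvalues (e i)) :
    ∑ j ∈ Finset.univ.filter (fun j : Fin (Fintype.card ΩA) => Fintype.card ΩB ≤ (j : ℕ)),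
        hH.eigenvalues (e j)
      ≤ 2 * TVB ψ + 2 * vartheta ψ := by
  have main : ∀ α γ, ∑ j ∈ Finset.univ.filter
      (fun j : Fin (Fintype.card ΩA) => Fintype.card ΩB ≤ (j : ℕ)), hH.eigenvalues (e j)
      ≤ 2 * TVB ψ + 2 * varthetaAG ψ α γ := by
    intro α γ
    refine le_trans ?_ (analytic_bound ψ hψ α γ)
    let u := hH.eigenvectorBasis.reindex e.symm
    let m : ΩB × ΩC → EuclideanSpace ℂ ΩA := fun i => WithLp.toLp 2 fun a => ψ (a, i.1, i.2)
    let v : ΩB → EuclideanSpace ℂ ΩA := fun b => WithLp.toLp 2 fun a =>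
      (Real.sqrt (condAB ψ a b) : ℂ) * Complex.exp (Complex.I * (α (a, b) : ℂ))
    let f : ΩB × ΩC → EuclideanSpace ℂ ΩA := fun i =>
      ((Real.sqrt (pBC ψ i.1 i.2) : ℂ) * Complex.exp (Complex.I * (γ (i.2, i.1) : ℂ))) • v i.1
    have hT : ∀ j, ∑ i, ⟪m i, u j⟫_ℂ • m i = ((hH.eigenvalues (e j) : ℝ) : ℂ) • u j := by
      intro j
      have h1 := hH.mulVec_eigenvectorBasis (e j)
      ext a
      have h2 := congrFun h1 a
      have hu : u j = hH.eigenvectorBasis (e j) := by simp [u]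
      rw [hu]
      simp only [Matrix.mulVec, dotProduct, Pi.smul_apply] at h2
      have hr : ∀ a', rhoA ψ a a' =
        ∑ b : ΩB, ∑ c : ΩC, ψ (a, b, c) * (starRingEnd ℂ) (ψ (a', b, c)) := fun _ => rfl
      simp only [hr, Finset.sum_mul] at h2
      simp only [PiLp.smul_apply, WithLp.ofLp_sum, Finset.sum_apply, WithLp.ofLp_smul,
        Pi.smul_apply, smul_eq_mul]
      refine Eq.trans ?_ h2
      simp only [m, PiLp.inner_apply, RCLike.inner_apply, Finset.sum_mul]
      rw [Fintype.sum_prod_type]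
      simp_rw [Finset.sum_comm (γ := ΩA)]
      refine Finset.sum_congr rfl fun a' _ => Finset.sum_congr rfl fun b _ =>
        Finset.sum_congr rfl fun c _ => ?_
      ring
    have hE := eckart (Fintype.card ΩA) (Fintype.card ΩB) u (fun j => hH.eigenvalues (e j)) m f hT
      hsort (Submodule.span ℂ (Set.range v)) (finrank_range_le_card v)
      (fun i => Submodule.smul_mem _ _ (Submodule.subset_span ⟨i.1, rfl⟩))
    refine hE.trans (le_of_eq ?_)
    rw [← sum_reorder, Fintype.sum_prod_type]
    refine Finset.sum_congr rfl fun b _ => Finset.sum_congr rfl fun c _ => ?_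
    rw [EuclideanSpace.norm_sq_eq]
    refine Finset.sum_congr rfl fun a _ => ?_
    congr 2
    simp only [m, f, v, PiLp.sub_apply, PiLp.smul_apply, smul_eq_mul]
    rw [Real.sqrt_mul (pBC_nonneg ψ b c)]
    push_cast
    rw [mul_add, Complex.exp_add]
    ring
  have hinf : (∑ j ∈ Finset.univ.filter
      (fun j : Fin (Fintype.card ΩA) => Fintype.card ΩB ≤ (j : ℕ)), hH.eigenvalues (e j)
      - 2 * TVB ψ) / 2 ≤ vartheta ψ :=
    le_ciInf fun α => le_ciInf fun γ => by linarith [main α γ]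
  linarith

end Stmt5
end

section
/- Single-scale entanglement bound (Theorem 4.2). Fix d ≥ 1, ν ≥ 2, regularity constants 0 < c_d ≤ C_d, and constants ξ, C_ξ, α ∈ (0,∞). Then there exists a constant C < ∞, depending only on d, ν, c_d, C_d, ξ, C_ξ, α, such that the following holds: for every finite W ⊆ ℤ^d, every unit vector ψ : Ω₀^W → ℂ, and every regular nonempty A ⊆ W with L(A) ≥ 2 for which TV_{B_l(A)}(A|C_l(A)) + ϑ_{B_l(A)}(A|C_l(A)) ≤ C_ξ · L(A)^{2α} · exp(−l/ξ) holds for every integer l ≥ 1, one has S(ρ_A(ψ)) ≤ C · |∂A| · ln L(A). -/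
/-!
Statement 6 (Theorem 4.2): single-scale entanglement bound.
-/

open Complex
open scoped Classical

namespace Stmt6

/-- ℓ¹-distance on `ℤ^d`. -/
def dist1 {d : ℕ} (u v : Fin d → ℤ) : ℕ := ∑ i, (u i - v i).natAbs

/-- distance between two finite subsets of `ℤ^d` (junk value `0` if one is empty). -/
noncomputable def fdist {d : ℕ} (S T : Finset (Fin d → ℤ)) : ℕ :=
  if h : (S ×ˢ T).Nonempty then (S ×ˢ T).inf' h fun p => dist1 p.1 p.2 else 0

/-- the boundary `∂A = {u ∈ A : d(u, W∖A) = 1}`. -/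
noncomputable def bdry {d : ℕ} (W A : Finset (Fin d → ℤ)) : Finset (Fin d → ℤ) :=
  A.filter fun u => fdist {u} (W \ A) = 1

/-- the buffer `B_l(A) = {u ∈ W∖A : d(u,A) ≤ l}`. -/
noncomputable def buf {d : ℕ} (W A : Finset (Fin d → ℤ)) (l : ℕ) : Finset (Fin d → ℤ) :=
  (W \ A).filter fun u => fdist {u} A ≤ l

/-- the complement `C_l(A) = W ∖ (A ∪ B_l(A))`. -/
noncomputable def com {d : ℕ} (W A : Finset (Fin d → ℤ)) (l : ℕ) : Finset (Fin d → ℤ) :=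
  W \ (A ∪ buf W A l)

/-- the length `L(A) = |A| / (c_d · |∂A|)`. -/
noncomputable def lenA {d : ℕ} (W A : Finset (Fin d → ℤ)) (cd : ℝ) : ℝ :=
  (A.card : ℝ) / (cd * (bdry W A).card)

/-- regularity of `A ⊆ W`. -/
noncomputable def regular {d : ℕ} (W A : Finset (Fin d → ℤ)) (cd Cd : ℝ) : Prop :=
  A.Nonempty ∧ ∀ l : ℕ, 1 ≤ l → (l : ℝ) ≤ lenA W A cd →
    cd * l * (bdry W A).card ≤ ((buf W A l).card : ℝ) ∧
    ((buf W A l).card : ℝ) ≤ Cd * l * (bdry W A).card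

variable {d : ℕ} {Ω₀ : Type*} [Fintype Ω₀] [DecidableEq Ω₀] [Nonempty Ω₀]

/-- restriction of a configuration on `W` to a subset `D ⊆ W`
(junk value on points outside `W`, which never occur when `D ⊆ W`). -/
noncomputable def resv {W : Finset (Fin d → ℤ)} (D : Finset (Fin d → ℤ))
    (σ : {x // x ∈ W} → Ω₀) (x : {y // y ∈ D}) : Ω₀ :=
  if h : (x : Fin d → ℤ) ∈ W then σ ⟨x, h⟩ else Classical.arbitrary Ω₀

/-- marginal `p(σ_D)` of a weight function `p` on configurations of `W`. -/
noncomputable def marg {W : Finset (Fin d → ℤ)} (p : ({x // x ∈ W} → Ω₀) → ℝ)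
    (D : Finset (Fin d → ℤ)) (σD : {y // y ∈ D} → Ω₀) : ℝ :=
  ∑ σ : {x // x ∈ W} → Ω₀, if resv D σ = σD then p σ else 0

/-- joint marginal `p(σ_D, σ_E)`. -/
noncomputable def marg2 {W : Finset (Fin d → ℤ)} (p : ({x // x ∈ W} → Ω₀) → ℝ)
    (D E : Finset (Fin d → ℤ)) (σD : {y // y ∈ D} → Ω₀) (σE : {y // y ∈ E} → Ω₀) : ℝ :=
  ∑ σ : {x // x ∈ W} → Ω₀, if resv D σ = σD ∧ resv E σ = σE then p σ else 0

/-- triple joint marginal `p(σ_D, σ_E, σ_F)`. -/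
noncomputable def marg3 {W : Finset (Fin d → ℤ)} (p : ({x // x ∈ W} → Ω₀) → ℝ)
    (D E F : Finset (Fin d → ℤ)) (σD : {y // y ∈ D} → Ω₀) (σE : {y // y ∈ E} → Ω₀)
    (σF : {y // y ∈ F} → Ω₀) : ℝ :=
  ∑ σ : {x // x ∈ W} → Ω₀,
    if resv D σ = σD ∧ resv E σ = σE ∧ resv F σ = σF then p σ else 0

/-- `TV_B(A|C)` (conventions: terms with vanishing marginals drop out). -/
noncomputable def TVcond {W : Finset (Fin d → ℤ)} (p : ({x // x ∈ W} → Ω₀) → ℝ)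
    (A B C : Finset (Fin d → ℤ)) : ℝ :=
  ∑ σB : {y // y ∈ B} → Ω₀, ∑ σC : {y // y ∈ C} → Ω₀, marg2 p B C σB σC *
    ∑ σA : {y // y ∈ A} → Ω₀,
      max (marg3 p A B C σA σB σC / marg2 p B C σB σC
            - marg2 p A B σA σB / marg p B σB) 0

/-- the quantity `ϑ` before optimization over phase functions. -/
noncomputable def thAG {W : Finset (Fin d → ℤ)} (ψ : ({x // x ∈ W} → Ω₀) → ℂ)
    (A B C : Finset (Fin d → ℤ))
    (α : ({y // y ∈ A} → Ω₀) × ({y // y ∈ B} → Ω₀) → ℝ)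
    (γ : ({y // y ∈ C} → Ω₀) × ({y // y ∈ B} → Ω₀) → ℝ) : ℝ :=
  Real.sqrt (∑ σ : {x // x ∈ W} → Ω₀, Complex.normSq (ψ σ) *
    Complex.normSq (1 - Complex.exp (Complex.I *
      ((α (resv A σ, resv B σ) + γ (resv C σ, resv B σ) - Complex.arg (ψ σ) : ℝ) : ℂ))))

/-- `ϑ_B(A|C)`, optimized over phase functions. -/
noncomputable def th {W : Finset (Fin d → ℤ)} (ψ : ({x // x ∈ W} → Ω₀) → ℂ)
    (A B C : Finset (Fin d → ℤ)) : ℝ :=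
  ⨅ (α : ({y // y ∈ A} → Ω₀) × ({y // y ∈ B} → Ω₀) → ℝ)
    (γ : ({y // y ∈ C} → Ω₀) × ({y // y ∈ B} → Ω₀) → ℝ), thAG ψ A B C α γ

/-- gluing a configuration on `D` with one on `W ∖ D`. -/
noncomputable def glue {W D : Finset (Fin d → ℤ)} (hD : D ⊆ W)
    (σD : {y // y ∈ D} → Ω₀) (τ : {y // y ∈ W \ D} → Ω₀) (x : {x // x ∈ W}) : Ω₀ :=
  if h : (x : Fin d → ℤ) ∈ D then σD ⟨x, h⟩
  else τ ⟨x, Finset.mem_sdiff.mpr ⟨x.2, h⟩⟩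

/-- reduced density matrix of `ψ` on `D ⊆ W`. -/
noncomputable def rhoD {W D : Finset (Fin d → ℤ)} (hD : D ⊆ W)
    (ψ : ({x // x ∈ W} → Ω₀) → ℂ) :
    Matrix ({y // y ∈ D} → Ω₀) ({y // y ∈ D} → Ω₀) ℂ :=
  Matrix.of fun σD σD' => ∑ τ : {y // y ∈ W \ D} → Ω₀,
    ψ (glue hD σD τ) * (starRingEnd ℂ) (ψ (glue hD σD' τ))

/-- von Neumann entropy of a Hermitian matrix. -/
noncomputable def vN {n : Type*} [Fintype n] [DecidableEq n] (M : Matrix n n ℂ) : ℝ :=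
  if h : M.IsHermitian then -∑ i, h.eigenvalues i * Real.log (h.eigenvalues i) else 0

theorem neg_mul_log_bound (x r : ℝ) (hx : 0 ≤ x) (hr : 0 < r) :
    -(x * Real.log x) ≤ x * Real.log r + 1 / r - x := by
  rcases hx.eq_or_lt with h | h
  · subst h; simp; positivity
  · have h1 := Real.log_le_sub_one_of_pos (show 0 < 1 / (r * x) by positivity)
    rw [one_div, Real.log_inv, Real.log_mul hr.ne' h.ne'] at h1
    have h2 := mul_le_mul_of_nonneg_left h1 hx
    have h3 : x * ((r * x)⁻¹ - 1) = 1 / r - x := by field_simp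
    linarith

theorem trace_conjT_mul {n m : Type*} [Fintype n] [Fintype m] (E : Matrix n m ℂ) :
    (Matrix.trace (E.conjTranspose * E)).re = ∑ i, ∑ t, Complex.normSq (E i t) := by
  rw [Finset.sum_comm]
  simp [Matrix.trace, Matrix.mul_apply, Complex.normSq_apply]

theorem trace_mul_conjT {n m : Type*} [Fintype n] [Fintype m] (E : Matrix n m ℂ) :
    (Matrix.trace (E * E.conjTranspose)).re = ∑ i, ∑ t, Complex.normSq (E i t) := by
  rw [Matrix.trace_mul_comm, trace_conjT_mul]

/-- orthogonal projection onto the column space -/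
theorem exists_proj {n k : Type*} [Fintype n] [Fintype k] [DecidableEq n] (F : Matrix n k ℂ) :
    ∃ Q : Matrix n n ℂ, Q.conjTranspose = Q ∧ Q * Q = Q ∧ Q * F = F ∧
      (Matrix.trace Q).re ≤ Fintype.card k := by
  let f : k → EuclideanSpace ℂ n := fun j => WithLp.toLp 2 (fun i => F i j)
  let V := Submodule.span ℂ (Set.range f)
  let b := stdOrthonormalBasis ℂ V
  let G : Matrix n (Fin (Module.finrank ℂ V)) ℂ := Matrix.of fun i j => (b j : EuclideanSpace ℂ n) i
  have hG : G.conjTranspose * G = 1 := by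
    ext i j
    have := (orthonormal_iff_ite.mp b.orthonormal) i j
    rw [Submodule.coe_inner, PiLp.inner_apply] at this
    rw [Matrix.mul_apply, Matrix.one_apply, ← this]
    refine Finset.sum_congr rfl fun x _ => ?_
    simp [G, mul_comm]
  refine ⟨G * G.conjTranspose, ?_, ?_, ?_, ?_⟩
  · simp
  · rw [Matrix.mul_assoc, ← Matrix.mul_assoc G.conjTranspose, hG, Matrix.one_mul]
  · have hF : ∃ c : Matrix (Fin (Module.finrank ℂ V)) k ℂ, F = G * c := by
      refine ⟨Matrix.of fun j x => b.repr ⟨f x, Submodule.subset_span ⟨x, rfl⟩⟩ j, ?_⟩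
      ext i x
      have h1 := b.sum_repr ⟨f x, Submodule.subset_span ⟨x, rfl⟩⟩
      have h2 := congrArg (fun v : V => (v : EuclideanSpace ℂ n) i) h1
      simp only [Submodule.coe_sum, Submodule.coe_smul] at h2
      rw [Matrix.mul_apply]
      have h3 : F i x = (f x) i := rfl
      rw [h3, ← h2]
      simp [G, mul_comm]
    obtain ⟨c, hc⟩ := hF
    have h4 : G * G.conjTranspose * (G * c) = G * c := by
      rw [Matrix.mul_assoc, ← Matrix.mul_assoc G.conjTranspose, hG, Matrix.one_mul]
    rwa [← hc] at h4
  · rw [Matrix.trace_mul_comm, hG, Matrix.trace_one]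
    simp only [Fintype.card_fin, Complex.natCast_re, Nat.cast_le]
    exact finrank_range_le_card f

theorem diag_nonneg_of_proj {n : Type*} [Fintype n] [DecidableEq n] (U Q : Matrix n n ℂ)
    (h1 : Q.conjTranspose = Q) (h2 : Q * Q = Q) (i : n) :
    0 ≤ ((U.conjTranspose * Q * U) i i).re := by
  have : U.conjTranspose * Q * U = (Q * U).conjTranspose * (Q * U) := by
    rw [Matrix.conjTranspose_mul, h1, Matrix.mul_assoc, Matrix.mul_assoc,
      ← Matrix.mul_assoc Q Q U, h2]
  rw [this, Matrix.mul_apply, Complex.re_sum]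
  refine Finset.sum_nonneg fun j _ => ?_
  simp only [Matrix.conjTranspose_apply, Complex.star_def, ← Complex.normSq_eq_conj_mul_self,
    Complex.ofReal_re]
  exact Complex.normSq_nonneg _

open scoped ComplexOrder in
theorem vN_bound {n m k : Type*} [Fintype n] [Fintype m] [Fintype k] [DecidableEq n]
    [Nonempty n] [Nonempty k] (M : Matrix n m ℂ) (F : Matrix n k ℂ) (H : Matrix k m ℂ) (δ : ℝ)
    (htr : ∑ i, ∑ t, Complex.normSq (M i t) = 1)
    (hδ : ∑ i, ∑ t, Complex.normSq (M i t - (F * H) i t) ≤ δ) :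
    vN (M * M.conjTranspose) ≤
      1 + Real.log (Fintype.card k) + δ * Real.log (Fintype.card n) := by
  obtain ⟨Q, hQ1, hQ2, hQF, hQt⟩ := exists_proj F
  have hH : (M * M.conjTranspose).IsHermitian := Matrix.isHermitian_mul_conjTranspose_self M
  have hpsd : (M * M.conjTranspose).PosSemidef := Matrix.posSemidef_self_mul_conjTranspose M
  rw [vN, dif_pos hH]
  set lam := hH.eigenvalues with hlam
  have hl0 : ∀ i, 0 ≤ lam i := hpsd.eigenvalues_nonneg
  let U : Matrix n n ℂ := (hH.eigenvectorUnitary : Matrix n n ℂ)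
  have hU1 : U.conjTranspose * U = 1 := Unitary.coe_star_mul_self hH.eigenvectorUnitary
  have hU2 : U * U.conjTranspose = 1 := Unitary.coe_mul_star_self hH.eigenvectorUnitary
  have hspec : M * M.conjTranspose
      = U * Matrix.diagonal (fun i => (lam i : ℂ)) * U.conjTranspose := hH.spectral_theorem
  let q : n → ℝ := fun i => ((U.conjTranspose * Q * U) i i).re
  have hq0 : ∀ i, 0 ≤ q i := diag_nonneg_of_proj U Q hQ1 hQ2
  have hP1 : (1 - Q).conjTranspose = 1 - Q := by simp [hQ1]
  have hP2 : (1 - Q) * (1 - Q) = 1 - Q := by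
    rw [Matrix.mul_sub, Matrix.sub_mul, Matrix.mul_one, Matrix.sub_mul, hQ2]; simp
  have hq1 : ∀ i, 0 ≤ 1 - q i := by
    intro i
    have := diag_nonneg_of_proj U (1 - Q) hP1 hP2 i
    rw [Matrix.mul_sub, Matrix.sub_mul, Matrix.mul_one, hU1] at this
    simpa [q] using this
  have hqs : ∑ i, q i ≤ Fintype.card k := by
    have : ∑ i, q i = (Matrix.trace Q).re := by
      have h : Matrix.trace Q = Matrix.trace (U.conjTranspose * Q * U) := by
        rw [Matrix.trace_mul_comm, ← Matrix.mul_assoc, hU2, Matrix.one_mul]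
      rw [h]; simp [Matrix.trace, q]
    rw [this]; exact hQt
  have hls : ∑ i, lam i = 1 := by
    have h1 : (Matrix.trace (M * M.conjTranspose)).re = ∑ i, lam i := by
      rw [hH.trace_eq_sum_eigenvalues]; simp [hlam]
    rw [← h1, trace_mul_conjT, htr]
  have hlq : ∑ i, lam i * q i = (Matrix.trace (M.conjTranspose * Q * M)).re := by
    have h : Matrix.trace (M.conjTranspose * Q * M)
        = Matrix.trace (Matrix.diagonal (fun i => (lam i : ℂ)) * (U.conjTranspose * Q * U)) := by
      rw [Matrix.trace_mul_comm, ← Matrix.mul_assoc, hspec, Matrix.mul_assoc, Matrix.mul_assoc,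
        Matrix.trace_mul_comm]
      simp only [Matrix.mul_assoc]
    rw [h]
    simp [Matrix.trace, q, Matrix.diagonal_mul]
  have hlp : ∑ i, lam i * (1 - q i) ≤ δ := by
    have e1 : ∑ i, lam i * (1 - q i) = (Matrix.trace (M.conjTranspose * (1 - Q) * M)).re := by
      simp only [mul_sub, mul_one, Finset.sum_sub_distrib]
      rw [hlq, Matrix.mul_sub, Matrix.sub_mul, Matrix.trace_sub, Matrix.mul_one, Complex.sub_re,
        trace_conjT_mul, htr, hls]
    set E := M - F * H with hE
    have e2 : M.conjTranspose * (1 - Q) * M = E.conjTranspose * (1 - Q) * E := by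
      have z : (1 - Q) * (F * H) = 0 := by
        rw [← Matrix.mul_assoc, Matrix.sub_mul, hQF]; simp
      have z' : (F * H).conjTranspose * (1 - Q) = 0 := by
        have := congrArg Matrix.conjTranspose z
        rwa [Matrix.conjTranspose_mul, hP1, Matrix.conjTranspose_zero] at this
      rw [hE, Matrix.conjTranspose_sub, Matrix.sub_mul, z', sub_zero, Matrix.mul_assoc,
        Matrix.mul_assoc, Matrix.mul_sub (1 - Q), z, sub_zero]
    have e3 : 0 ≤ (Matrix.trace (E.conjTranspose * Q * E)).re := by
      have : E.conjTranspose * Q * E = (Q * E).conjTranspose * (Q * E) := by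
        rw [Matrix.conjTranspose_mul, hQ1, Matrix.mul_assoc, Matrix.mul_assoc,
          ← Matrix.mul_assoc Q Q E, hQ2]
      rw [this, trace_conjT_mul]
      exact Finset.sum_nonneg fun i _ => Finset.sum_nonneg fun t _ => Complex.normSq_nonneg _
    rw [e1, e2, Matrix.mul_sub E.conjTranspose, Matrix.sub_mul _ _ E, Matrix.trace_sub, Matrix.mul_one,
      Complex.sub_re, trace_conjT_mul]
    have : ∑ i, ∑ t, Complex.normSq (E i t) ≤ δ := hδ
    linarith
  set r : ℝ := (Fintype.card k : ℝ)
  set N : ℝ := (Fintype.card n : ℝ) with hN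
  have hr : 1 ≤ r := by simpa [r] using Nat.one_le_iff_ne_zero.mpr (Fintype.card_ne_zero (α := k))
  have hn : 1 ≤ N := by simpa [N] using Nat.one_le_iff_ne_zero.mpr (Fintype.card_ne_zero (α := n))
  have key : ∀ i, -(lam i * Real.log (lam i)) ≤
      Real.log r * (lam i * q i) + (1 / r) * q i + Real.log N * (lam i * (1 - q i))
        + (1 / N) * (1 - q i) - lam i := by
    intro i
    have a1 := mul_le_mul_of_nonneg_left
      (neg_mul_log_bound (lam i) r (hl0 i) (by linarith)) (hq0 i)
    have a2 := mul_le_mul_of_nonneg_left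
      (neg_mul_log_bound (lam i) N (hl0 i) (by linarith)) (hq1 i)
    nlinarith [a1, a2]
  have s := Finset.sum_le_sum (s := Finset.univ) fun i _ => key i
  simp only [Finset.sum_add_distrib, Finset.sum_sub_distrib, ← Finset.mul_sum,
    Finset.sum_neg_distrib] at s
  have t1 : ∑ i, lam i * q i ≤ 1 := by
    rw [← hls]
    exact Finset.sum_le_sum fun i _ => by nlinarith [hl0 i, hq1 i]
  have t2 : (1 / r) * ∑ i, q i ≤ 1 := by
    rw [one_div, inv_mul_le_iff₀ (by linarith)]; simpa using hqs
  have t3 : (1 / N) * (∑ i : n, (1:ℝ) - ∑ i, q i) ≤ 1 := by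
    rw [one_div, inv_mul_le_iff₀ (by linarith)]
    have := Finset.sum_nonneg (s := Finset.univ) fun i _ => hq0 i
    simp [hN]; linarith
  have t4 := mul_le_mul_of_nonneg_left hlp (Real.log_nonneg hn)
  have t5 := mul_le_mul_of_nonneg_left t1 (Real.log_nonneg hr)
  rw [hls] at s
  linarith

theorem sqrt_sub_sq_le (x y : ℝ) (hx : 0 ≤ x) (hy : 0 ≤ y) :
    (Real.sqrt x - Real.sqrt y) ^ 2 ≤ 2 * max (x - y) 0 - (x - y) := by
  have h1 := Real.sqrt_nonneg x
  have h2 := Real.sqrt_nonneg y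
  have e1 := Real.sq_sqrt hx
  have e2 := Real.sq_sqrt hy
  set u := Real.sqrt x
  set v := Real.sqrt y
  rcases le_total (x - y) 0 with h | h
  · rw [max_eq_right h]
    have : u ≤ v := Real.sqrt_le_sqrt (by linarith)
    nlinarith
  · rw [max_eq_left h]
    have : v ≤ u := Real.sqrt_le_sqrt (by linarith)
    nlinarith

theorem hellinger_abs {α β γ : Type*} [Fintype α] [Fintype β] [Fintype γ]
    (p : α → β → γ → ℝ) (hp : ∀ a b c, 0 ≤ p a b c)
    (pAB : α → β → ℝ) (pBC : β → γ → ℝ) (pB : β → ℝ)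
    (hAB : ∀ a b, pAB a b = ∑ c, p a b c) (hBC : ∀ b c, pBC b c = ∑ a, p a b c)
    (hB : ∀ b, pB b = ∑ a, ∑ c, p a b c) :
    ∑ b, ∑ c, ∑ a, (Real.sqrt (p a b c) - Real.sqrt (pAB a b / pB b * pBC b c)) ^ 2 ≤
      2 * ∑ b, ∑ c, pBC b c * ∑ a, max (p a b c / pBC b c - pAB a b / pB b) 0 := by
  have hAB0 : ∀ a b, 0 ≤ pAB a b := fun a b => by
    rw [hAB]; exact Finset.sum_nonneg fun c _ => hp a b c
  have hBC0 : ∀ b c, 0 ≤ pBC b c := fun b c => by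
    rw [hBC]; exact Finset.sum_nonneg fun a _ => hp a b c
  have hB0 : ∀ b, 0 ≤ pB b := fun b => by
    rw [hB]; exact Finset.sum_nonneg fun a _ => Finset.sum_nonneg fun c _ => hp a b c
  have hBA : ∀ b, ∑ a, pAB a b = pB b := fun b => by
    rw [hB]; exact Finset.sum_congr rfl fun a _ => hAB a b
  have hBCs : ∀ b, ∑ c, pBC b c = pB b := fun b => by
    rw [hB, Finset.sum_comm]; exact Finset.sum_congr rfl fun c _ => hBC b c
  have hmax : ∀ a b c, pBC b c * max (p a b c / pBC b c - pAB a b / pB b) 0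
      = max (p a b c - pAB a b / pB b * pBC b c) 0 := by
    intro a b c
    rcases (hBC0 b c).eq_or_lt with h | h
    · have : p a b c = 0 := by
        have h' : ∑ a, p a b c = 0 := by rw [← hBC, ← h]
        exact (Finset.sum_eq_zero_iff_of_nonneg fun a _ => hp a b c).mp h' a (Finset.mem_univ a)
      rw [← h, this]; simp
    · rw [mul_max_of_nonneg _ _ h.le, mul_zero]
      congr 1
      field_simp
  have key : ∀ b, ∑ c, ∑ a, (Real.sqrt (p a b c) - Real.sqrt (pAB a b / pB b * pBC b c)) ^ 2 ≤
      2 * ∑ c, pBC b c * ∑ a, max (p a b c / pBC b c - pAB a b / pB b) 0 := by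
    intro b
    have h1 : ∑ c, ∑ a, (Real.sqrt (p a b c) - Real.sqrt (pAB a b / pB b * pBC b c)) ^ 2 ≤
        ∑ c, ∑ a, (2 * max (p a b c - pAB a b / pB b * pBC b c) 0
          - (p a b c - pAB a b / pB b * pBC b c)) :=
      Finset.sum_le_sum fun c _ => Finset.sum_le_sum fun a _ =>
        sqrt_sub_sq_le _ _ (hp a b c) (mul_nonneg (div_nonneg (hAB0 a b) (hB0 b)) (hBC0 b c))
    refine h1.trans ?_
    simp only [Finset.sum_sub_distrib, ← Finset.mul_sum, hmax, ← Finset.sum_mul, ← Finset.sum_div,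
      hBA, ← hBC, hBCs]
    simp only [Finset.mul_sum (s := (Finset.univ : Finset α)), hmax]
    have : pB b / pB b * pB b = pB b := by
      rcases eq_or_ne (pB b) 0 with h | h
      · simp [h]
      · field_simp
    rw [this]; simp [Finset.mul_sum]
  rw [Finset.mul_sum]
  exact Finset.sum_le_sum fun b _ => key b

theorem phase_bound (z : ℂ) (s t : ℝ) :
    Complex.normSq (z - (s : ℂ) * Complex.exp (Complex.I * (t : ℂ))) ≤
      2 * (Complex.normSq z * Complex.normSq (1 - Complex.exp (Complex.I *
        ((t - Complex.arg z : ℝ) : ℂ)))) + 2 * (Real.sqrt (Complex.normSq z) - s) ^ 2 := by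
  set m : ℝ := Real.sqrt (Complex.normSq z) with hm
  have hmz : m = ‖z‖ := by rw [hm, Complex.normSq_eq_norm_sq, Real.sqrt_sq (norm_nonneg z)]
  have hz : z = (m : ℂ) * Complex.exp (Complex.I * (Complex.arg z : ℂ)) := by
    rw [hmz, mul_comm Complex.I, Complex.norm_mul_exp_arg_mul_I]
  have e : Complex.exp (Complex.I * ((t - Complex.arg z : ℝ) : ℂ)) *
      Complex.exp (Complex.I * (Complex.arg z : ℂ)) = Complex.exp (Complex.I * (t : ℂ)) := by
    rw [← Complex.exp_add]; congr 1; push_cast; ring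
  have h1 : z - (s : ℂ) * Complex.exp (Complex.I * (t : ℂ)) =
      z * (1 - Complex.exp (Complex.I * ((t - Complex.arg z : ℝ) : ℂ))) +
        ((m - s : ℝ) : ℂ) * Complex.exp (Complex.I * (t : ℂ)) := by
    have h2 : z * Complex.exp (Complex.I * ((t - Complex.arg z : ℝ) : ℂ)) =
        (m : ℂ) * Complex.exp (Complex.I * (t : ℂ)) := by
      rw [← e]
      nth_rewrite 1 [hz]
      ring
    rw [mul_sub, h2]; push_cast; ring
  have h3 : ∀ x y : ℂ, Complex.normSq (x + y) ≤ 2 * Complex.normSq x + 2 * Complex.normSq y := by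
    intro x y
    simp only [Complex.normSq_apply, Complex.add_re, Complex.add_im]
    nlinarith [sq_nonneg (x.re - y.re), sq_nonneg (x.im - y.im)]
  have h4 : Complex.normSq (Complex.exp (Complex.I * (t : ℂ))) = 1 := by
    rw [Complex.normSq_eq_norm_sq, mul_comm, Complex.norm_exp_ofReal_mul_I]; simp
  rw [h1]
  refine (h3 _ _).trans (le_of_eq ?_)
  rw [Complex.normSq_mul, Complex.normSq_mul, h4, Complex.normSq_ofReal]
  ring

theorem normSq_one_sub_exp_le (t : ℝ) :
    Complex.normSq (1 - Complex.exp (Complex.I * (t : ℂ))) ≤ 4 := by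
  have h := norm_sub_le (1 : ℂ) (Complex.exp (Complex.I * (t : ℂ)))
  rw [mul_comm, Complex.norm_exp_ofReal_mul_I, norm_one, mul_comm] at h
  rw [Complex.normSq_eq_norm_sq]
  nlinarith [norm_nonneg (1 - Complex.exp (Complex.I * (t : ℂ)))]

/-- configurations on `W` split into three restrictions. -/
theorem exists_split {W A B C : Finset (Fin d → ℤ)} (hAB : Disjoint A B) (hAC : Disjoint A C)
    (hBC : Disjoint B C) (hW : W = A ∪ B ∪ C) :
    Function.Bijective (fun σ : {x // x ∈ W} → Ω₀ =>
      ((resv A σ, resv B σ, resv C σ) :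
        ({y // y ∈ A} → Ω₀) × ({y // y ∈ B} → Ω₀) × ({y // y ∈ C} → Ω₀))) := by
  constructor
  · intro σ τ h
    simp only [Prod.mk.injEq] at h
    obtain ⟨h1, h2, h3⟩ := h
    funext ⟨x, hx⟩
    have hx' := hx
    rw [hW, Finset.mem_union, Finset.mem_union] at hx'
    rcases hx' with (h | h) | h
    · simpa [resv, hx] using congrFun h1 ⟨x, h⟩
    · simpa [resv, hx] using congrFun h2 ⟨x, h⟩
    · simpa [resv, hx] using congrFun h3 ⟨x, h⟩
  · rintro ⟨u, v, w⟩
    refine ⟨fun x => if h : x.1 ∈ A then u ⟨x.1, h⟩ else if h : x.1 ∈ B then v ⟨x.1, h⟩ else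
      if h : x.1 ∈ C then w ⟨x.1, h⟩ else Classical.arbitrary Ω₀, ?_⟩
    simp only [Prod.mk.injEq]
    refine ⟨?_, ?_, ?_⟩
    · funext ⟨x, hx⟩
      have : x ∈ W := by rw [hW]; simp [hx]
      simp [resv, this, hx]
    · funext ⟨x, hx⟩
      have : x ∈ W := by rw [hW]; simp [hx]
      have h1 : x ∉ A := Finset.disjoint_right.mp hAB hx
      simp [resv, this, hx, h1]
    · funext ⟨x, hx⟩
      have : x ∈ W := by rw [hW]; simp [hx]
      have h1 : x ∉ A := Finset.disjoint_right.mp hAC hx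
      have h2 : x ∉ B := Finset.disjoint_right.mp hBC hx
      simp [resv, this, hx, h1, h2]

theorem hellinger_config {W A B C : Finset (Fin d → ℤ)} (hAB : Disjoint A B) (hAC : Disjoint A C)
    (hBC : Disjoint B C) (hW : W = A ∪ B ∪ C) (P : ({x // x ∈ W} → Ω₀) → ℝ)
    (hP : ∀ σ, 0 ≤ P σ) :
    ∑ σ, (Real.sqrt (P σ) - Real.sqrt (marg2 P A B (resv A σ) (resv B σ) / marg P B (resv B σ)
      * marg2 P B C (resv B σ) (resv C σ))) ^ 2 ≤ 2 * TVcond P A B C := by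
  let e := Equiv.ofBijective _ (exists_split (Ω₀ := Ω₀) hAB hAC hBC hW)
  have he : ∀ σ, e σ = (resv A σ, resv B σ, resv C σ) := fun σ => rfl
  have hsum : ∀ f : ({x // x ∈ W} → Ω₀) → ℝ,
      ∑ σ, f σ = ∑ a, ∑ b, ∑ c, f (e.symm (a, b, c)) := by
    intro f
    rw [← Equiv.sum_comp e.symm, Fintype.sum_prod_type]
    refine Finset.sum_congr rfl fun a _ => ?_
    rw [Fintype.sum_prod_type]
  have h1 : ∀ a b c, resv A (e.symm (a, b, c)) = a ∧ resv B (e.symm (a, b, c)) = b ∧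
      resv C (e.symm (a, b, c)) = c := by
    intro a b c
    have := e.apply_symm_apply (a, b, c)
    rw [he] at this
    simpa only [Prod.mk.injEq] using this
  have hA' : ∀ a b c, resv A (e.symm (a, b, c)) = a := fun a b c => (h1 a b c).1
  have hB' : ∀ a b c, resv B (e.symm (a, b, c)) = b := fun a b c => (h1 a b c).2.1
  have hC' : ∀ a b c, resv C (e.symm (a, b, c)) = c := fun a b c => (h1 a b c).2.2
  let p := fun a b c => P (e.symm (a, b, c))
  have m3 : ∀ a b c, marg3 P A B C a b c = p a b c := by
    intro a b c
    rw [marg3, hsum]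
    simp only [hA', hB', hC', ite_and, Finset.sum_ite_eq', Finset.sum_ite_irrel, Finset.sum_const_zero,
      Finset.mem_univ, if_true, p]
  have mab : ∀ a b, marg2 P A B a b = ∑ c, p a b c := by
    intro a b
    rw [marg2, hsum]
    simp only [hA', hB', ite_and, Finset.sum_ite_eq', Finset.sum_ite_irrel, Finset.sum_const_zero,
      Finset.mem_univ, if_true, p]
  have mbc : ∀ b c, marg2 P B C b c = ∑ a, p a b c := by
    intro a b
    rw [marg2, hsum]
    simp only [hC', hB', ite_and, Finset.sum_ite_eq', Finset.sum_ite_irrel, Finset.sum_const_zero,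
      Finset.mem_univ, if_true, p]
  have mb : ∀ b, marg P B b = ∑ a, ∑ c, p a b c := by
    intro b
    rw [marg, hsum]
    simp only [hB', Finset.sum_ite_eq', Finset.sum_ite_irrel, Finset.sum_const_zero,
      Finset.mem_univ, if_true, p]
  have := hellinger_abs p (fun a b c => hP _) (marg2 P A B) (marg2 P B C) (marg P B) mab mbc mb
  rw [hsum, TVcond]
  simp only [hA', hB', hC', m3]
  refine le_trans (le_of_eq ?_) this
  rw [Finset.sum_comm]
  refine Finset.sum_congr rfl fun b _ => ?_
  rw [Finset.sum_comm]

theorem glue_bij {W A : Finset (Fin d → ℤ)} (hA : A ⊆ W) :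
    Function.Bijective (fun x : ({y // y ∈ A} → Ω₀) × ({y // y ∈ W \ A} → Ω₀) =>
      glue hA x.1 x.2) := by
  constructor
  · rintro ⟨u, v⟩ ⟨u', v'⟩ h
    simp only at h
    have h1 : u = u' := by
      funext ⟨x, hx⟩
      simpa [glue, hx] using congrFun h ⟨x, hA hx⟩
    have h2 : v = v' := by
      funext ⟨x, hx⟩
      have hx' := Finset.mem_sdiff.mp hx
      simpa [glue, hx'.2] using congrFun h ⟨x, hx'.1⟩
    rw [h1, h2]
  · intro σ
    refine ⟨(fun x => σ ⟨x.1, hA x.2⟩, fun x => σ ⟨x.1, (Finset.mem_sdiff.mp x.2).1⟩), ?_⟩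
    funext ⟨x, hx⟩
    by_cases h : x ∈ A <;> simp [glue, h]

theorem sum_glue {W A : Finset (Fin d → ℤ)} (hA : A ⊆ W) (f : ({x // x ∈ W} → Ω₀) → ℝ) :
    ∑ a : {y // y ∈ A} → Ω₀, ∑ τ : {y // y ∈ W \ A} → Ω₀, f (glue hA a τ) = ∑ σ, f σ := by
  rw [← Fintype.sum_prod_type']
  exact Fintype.sum_bijective _ (glue_bij hA) _ _ fun _ => rfl

theorem resv_glue_self {W A : Finset (Fin d → ℤ)} (hA : A ⊆ W)
    (a : {y // y ∈ A} → Ω₀) (τ : {y // y ∈ W \ A} → Ω₀) : resv A (glue hA a τ) = a := by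
  funext ⟨x, hx⟩
  simp [resv, glue, hx, hA hx]

theorem resv_glue_of_disjoint {W A B : Finset (Fin d → ℤ)} (hA : A ⊆ W) (hAB : Disjoint A B)
    (a a' : {y // y ∈ A} → Ω₀) (τ : {y // y ∈ W \ A} → Ω₀) :
    resv B (glue hA a τ) = resv B (glue hA a' τ) := by
  funext ⟨x, hx⟩
  have h1 : x ∉ A := Finset.disjoint_right.mp hAB hx
  simp [resv, glue, h1]

theorem rhoD_eq {W A : Finset (Fin d → ℤ)} (hA : A ⊆ W) (ψ : ({x // x ∈ W} → Ω₀) → ℂ) :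
    rhoD hA ψ = (Matrix.of fun a τ => ψ (glue hA a τ)) *
      (Matrix.of fun a τ => ψ (glue hA a τ)).conjTranspose := by
  ext a a'
  simp [rhoD, Matrix.mul_apply]

theorem log_card_config (D : Finset (Fin d → ℤ)) :
    Real.log (Fintype.card ({y // y ∈ D} → Ω₀)) = D.card * Real.log (Fintype.card Ω₀) := by
  rw [Fintype.card_fun, Fintype.card_coe, Nat.cast_pow, Real.log_pow]

theorem vN_trivial {W A : Finset (Fin d → ℤ)} (hA : A ⊆ W) (ψ : ({x // x ∈ W} → Ω₀) → ℂ)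
    (hψ : ∑ σ, Complex.normSq (ψ σ) = 1) :
    vN (rhoD hA ψ) ≤ 1 + A.card * Real.log (Fintype.card Ω₀) := by
  rw [rhoD_eq]
  have := vN_bound (Matrix.of fun (a : {y // y ∈ A} → Ω₀) τ => ψ (glue hA a τ)) 1
    (Matrix.of fun a τ => ψ (glue hA a τ)) 0
    (by rw [← hψ]; exact sum_glue hA fun σ => Complex.normSq (ψ σ)) (by simp)
  rw [log_card_config, zero_mul, add_zero] at this
  exact this

theorem vN_config {W A B C : Finset (Fin d → ℤ)} (hA : A ⊆ W) (hAB : Disjoint A B)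
    (hAC : Disjoint A C) (hBC : Disjoint B C) (hW : W = A ∪ B ∪ C)
    (ψ : ({x // x ∈ W} → Ω₀) → ℂ) (hψ : ∑ σ, Complex.normSq (ψ σ) = 1) (η : ℝ) (hη : 0 < η)
    (h : TVcond (fun σ => Complex.normSq (ψ σ)) A B C + th ψ A B C ≤ η) :
    vN (rhoD hA ψ) ≤ 1 + B.card * Real.log (Fintype.card Ω₀)
      + 8 * η * (A.card * Real.log (Fintype.card Ω₀)) := by
  set P : ({x // x ∈ W} → Ω₀) → ℝ := fun σ => Complex.normSq (ψ σ) with hPdef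
  have hP : ∀ σ, 0 ≤ P σ := fun σ => Complex.normSq_nonneg _
  obtain ⟨α, hα⟩ := exists_lt_of_ciInf_lt (show th ψ A B C < th ψ A B C + η by linarith)
  obtain ⟨γ, hγ⟩ := exists_lt_of_ciInf_lt hα
  set t := thAG ψ A B C α γ with ht
  set S : ℝ := ∑ σ : {x // x ∈ W} → Ω₀, Complex.normSq (ψ σ) *
    Complex.normSq (1 - Complex.exp (Complex.I *
      ((α (resv A σ, resv B σ) + γ (resv C σ, resv B σ) - Complex.arg (ψ σ) : ℝ) : ℂ))) with hS
  have hS0 : 0 ≤ S := Finset.sum_nonneg fun σ _ =>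
    mul_nonneg (Complex.normSq_nonneg _) (Complex.normSq_nonneg _)
  have hS4 : S ≤ 4 := by
    calc S ≤ ∑ σ, Complex.normSq (ψ σ) * 4 := Finset.sum_le_sum fun σ _ =>
            mul_le_mul_of_nonneg_left (normSq_one_sub_exp_le _) (Complex.normSq_nonneg _)
      _ = 4 := by rw [← Finset.sum_mul, hψ, one_mul]
  have htS : t = Real.sqrt S := rfl
  have ht0 : 0 ≤ t := Real.sqrt_nonneg _
  have ht2 : t ≤ 2 := by
    rw [htS, Real.sqrt_le_left (by norm_num)]; linarith
  have htt : t ^ 2 = S := Real.sq_sqrt hS0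
  have hS2 : S ≤ 2 * t := by nlinarith
  have hH := hellinger_config hAB hAC hBC hW P hP
  let a0 : {y // y ∈ A} → Ω₀ := fun _ => Classical.arbitrary Ω₀
  let F : Matrix ({y // y ∈ A} → Ω₀) ({y // y ∈ B} → Ω₀) ℂ := Matrix.of fun a b =>
    (Real.sqrt (marg2 P A B a b / marg P B b) : ℂ) * Complex.exp (Complex.I * (α (a, b) : ℂ))
  let H : Matrix ({y // y ∈ B} → Ω₀) ({y // y ∈ W \ A} → Ω₀) ℂ := Matrix.of fun b τ =>
    if b = resv B (glue hA a0 τ) then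
      (Real.sqrt (marg2 P B C b (resv C (glue hA a0 τ))) : ℂ) *
        Complex.exp (Complex.I * (γ (resv C (glue hA a0 τ), b) : ℂ)) else 0
  have hm2 : ∀ a b, 0 ≤ marg2 P A B a b := fun a b =>
    Finset.sum_nonneg fun σ _ => by split_ifs <;> simp [hP]
  have hm1 : ∀ b, 0 ≤ marg P B b := fun b =>
    Finset.sum_nonneg fun σ _ => by split_ifs <;> simp [hP]
  let φ : ({x // x ∈ W} → Ω₀) → ℂ := fun σ =>
    ((Real.sqrt (marg2 P A B (resv A σ) (resv B σ) / marg P B (resv B σ)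
      * marg2 P B C (resv B σ) (resv C σ)) : ℝ) : ℂ) * Complex.exp (Complex.I *
        ((α (resv A σ, resv B σ) + γ (resv C σ, resv B σ) : ℝ) : ℂ))
  have hφ : ∀ a τ, (F * H) a τ = φ (glue hA a τ) := by
    intro a τ
    rw [Matrix.mul_apply]
    simp only [H, Matrix.of_apply, mul_ite, mul_zero, Finset.sum_ite_eq', Finset.sum_ite_eq,
      Finset.mem_univ, if_true, F, φ]
    rw [resv_glue_self, resv_glue_of_disjoint hA hAB a a0, resv_glue_of_disjoint hA hAC a a0,
      Real.sqrt_mul (div_nonneg (hm2 _ _) (hm1 _))]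
    push_cast
    rw [mul_add, Complex.exp_add]
    ring
  rw [rhoD_eq]
  have := vN_bound (Matrix.of fun (a : {y // y ∈ A} → Ω₀) τ => ψ (glue hA a τ)) F H (8 * η)
    (by rw [← hψ]; exact sum_glue hA fun σ => Complex.normSq (ψ σ)) (by
      simp only [hφ, Matrix.of_apply]
      rw [sum_glue hA fun σ => Complex.normSq (ψ σ - φ σ)]
      calc ∑ σ, Complex.normSq (ψ σ - φ σ)
          ≤ ∑ σ, (2 * (Complex.normSq (ψ σ) * Complex.normSq (1 - Complex.exp (Complex.I *
      ((α (resv A σ, resv B σ) + γ (resv C σ, resv B σ) - Complex.arg (ψ σ) : ℝ) : ℂ))))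
            + 2 * (Real.sqrt (P σ) - Real.sqrt (marg2 P A B (resv A σ) (resv B σ)
              / marg P B (resv B σ) * marg2 P B C (resv B σ) (resv C σ))) ^ 2) :=
            Finset.sum_le_sum fun σ _ => phase_bound _ _ _
        _ ≤ 2 * S + 2 * (2 * TVcond P A B C) := by
            rw [Finset.sum_add_distrib, ← Finset.mul_sum, ← Finset.mul_sum]
            linarith
        _ ≤ 8 * η := by linarith)
  rw [log_card_config, log_card_config] at this
  exact this

/-- **Theorem 4.2** (single-scale entanglement bound). -/
theorem single_scale_bound (hd : 1 ≤ d) (hν : 2 ≤ Fintype.card Ω₀)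
    (cd Cd ξ Cξ a : ℝ) (hcd : 0 < cd) (hcC : cd ≤ Cd) (hξ : 0 < ξ)
    (hCξ : 0 < Cξ) (ha : 0 < a) :
    ∃ C : ℝ, ∀ (W A : Finset (Fin d → ℤ)) (hA : A ⊆ W)
      (ψ : ({x // x ∈ W} → Ω₀) → ℂ),
      (∑ σ : {x // x ∈ W} → Ω₀, Complex.normSq (ψ σ)) = 1 →
      regular W A cd Cd →
      2 ≤ lenA W A cd →
      (∀ l : ℕ, 1 ≤ l →
        TVcond (fun σ => Complex.normSq (ψ σ)) A (buf W A l) (com W A l) +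
            th ψ A (buf W A l) (com W A l)
          ≤ Cξ * lenA W A cd ^ (2 * a) * Real.exp (-(l : ℝ) / ξ)) →
      vN (rhoD hA ψ) ≤ C * (bdry W A).card * Real.log (lenA W A cd) := by
  set lν := Real.log (Fintype.card Ω₀) with hlν
  have hlν0 : 0 ≤ lν := Real.log_natCast_nonneg _
  set K : ℝ := ξ * (2 * a + 1) with hK
  have hK0 : 0 < K := by positivity
  have hCd : 0 < Cd := by linarith
  refine ⟨2 + (Cd * (K + 2) + 16 * Cξ * cd + cd * (K + 2)) * lν, ?_⟩
  intro W A hA ψ hψ hreg hL hdec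
  set L := lenA W A cd with hLdef
  set b : ℝ := ((bdry W A).card : ℝ) with hb
  have hb1 : 1 ≤ b := by
    rw [hb, Nat.one_le_cast, Nat.one_le_iff_ne_zero]
    intro h0
    have : L = 0 := by rw [hLdef, lenA, h0]; simp
    linarith
  have hAc : (A.card : ℝ) = cd * L * b := by
    rw [hLdef, lenA, ← hb]; field_simp
  have hlogL : 1 / 2 ≤ Real.log L := by
    have h1 : Real.log 2 ≤ Real.log L := Real.log_le_log (by norm_num) hL
    have h2 := Real.log_two_gt_d9
    linarith
  have hL0 : 0 < L := by linarith
  set l := ⌈K * Real.log L⌉₊ with hl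
  have hl1 : 1 ≤ l := Nat.one_le_iff_ne_zero.mpr (Nat.ceil_pos.mpr (by positivity)).ne'
  have hlu : (l : ℝ) ≤ (K + 2) * Real.log L := by
    have := Nat.ceil_lt_add_one (show 0 ≤ K * Real.log L by positivity)
    rw [← hl] at this
    linarith
  have hll : K * Real.log L ≤ l := Nat.le_ceil _
  have hone : 1 ≤ 2 * b * Real.log L := by nlinarith
  have hbl : b ≤ 2 * b * Real.log L := by nlinarith
  set x := b * Real.log L with hx
  have hx0 : 0 ≤ x := by positivity
  rcases le_or_gt (l : ℝ) L with hcase | hcase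
  · set η := Cξ * L ^ (2 * a) * Real.exp (-(l : ℝ) / ξ) with hη
    have hη0 : 0 < η := by positivity
    have hηL : η * L ≤ Cξ := by
      have h1 : Real.exp (-(l : ℝ) / ξ) ≤ L ^ (-(2 * a + 1)) := by
        rw [Real.rpow_def_of_pos hL0, Real.exp_le_exp, div_le_iff₀ hξ]
        rw [hK] at hll
        linarith
      have h2 : L ^ (2 * a) * L ^ (-(2 * a + 1)) * L = 1 := by
        rw [← Real.rpow_add hL0, ← Real.rpow_add_one hL0.ne']
        ring_nf; simp
      calc η * L ≤ Cξ * L ^ (2 * a) * L ^ (-(2 * a + 1)) * L := by rw [hη]; gcongr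
        _ = Cξ * (L ^ (2 * a) * L ^ (-(2 * a + 1)) * L) := by ring
        _ = Cξ := by rw [h2, mul_one]
    have hbufW : buf W A l ⊆ W \ A := Finset.filter_subset _ _
    have hv := vN_config hA (B := buf W A l) (C := com W A l)
      (Finset.disjoint_sdiff.mono_right hbufW)
      (Finset.disjoint_sdiff.mono_left Finset.subset_union_left)
      (Finset.disjoint_sdiff.mono_left Finset.subset_union_right)
      (by
        rw [com, Finset.union_sdiff_of_subset]
        exact Finset.union_subset hA (hbufW.trans Finset.sdiff_subset))
      ψ hψ η hη0 (hdec l hl1)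
    have hB := (hreg.2 l hl1 hcase).2
    have hB' : ((buf W A l).card : ℝ) ≤ Cd * (K + 2) * x := by
      refine hB.trans ?_
      calc Cd * l * b ≤ Cd * ((K + 2) * Real.log L) * b := by gcongr
        _ = Cd * (K + 2) * x := by rw [hx]; ring
    have h2 : 8 * η * (A.card * lν) ≤ 16 * Cξ * cd * x * lν := by
      calc 8 * η * (A.card * lν) = 8 * cd * (η * L) * b * lν := by rw [hAc]; ring
        _ ≤ 8 * cd * Cξ * (2 * b * Real.log L) * lν := by gcongr
        _ = _ := by rw [hx]; ring
    have h3 := mul_le_mul_of_nonneg_right hB' hlν0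
    have h4 : 0 ≤ cd * (K + 2) * lν * x := by positivity
    calc _ ≤ _ := hv
      _ ≤ 2 * x + Cd * (K + 2) * x * lν + 16 * Cξ * cd * x * lν + cd * (K + 2) * lν * x := by
        linarith
      _ = _ := by rw [hx]; ring
  · have hv := vN_trivial hA ψ hψ
    have h1 : (A.card : ℝ) ≤ cd * (K + 2) * x := by
      rw [hAc]
      calc cd * L * b ≤ cd * ((K + 2) * Real.log L) * b := by gcongr; linarith
        _ = _ := by rw [hx]; ring
    have h3 := mul_le_mul_of_nonneg_right h1 hlν0
    have h4 : 0 ≤ Cd * (K + 2) * lν * x := by positivity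
    have h5 : 0 ≤ 16 * Cξ * cd * lν * x := by positivity
    calc _ ≤ _ := hv
      _ ≤ 2 * x + cd * (K + 2) * x * lν + 16 * Cξ * cd * lν * x + Cd * (K + 2) * lν * x := by
        linarith
      _ = _ := by rw [hx]; ring

end Stmt6
end

section
/- Sub-cocycle property of the inter-domain correlation (Theorem 6.1, part (iii)). For any probability mass function p on Ω₀^W and any pairwise disjoint subsets A, C, D ⊆ W: TV(A|C ∪ D) ≤ TV(A|C) + TV_C(A|D). -/
/-!
Statement 13 (Theorem 6.1, part (iii)): sub-cocycle property of the
inter-domain correlation.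
-/

open scoped Classical

namespace Stmt13

variable {Ω₀ W : Type*} [Fintype Ω₀] [DecidableEq Ω₀] [Fintype W] [DecidableEq W]

/-- marginal `p(σ_S)`. -/
noncomputable def marg (p : (W → Ω₀) → ℝ) (S : Finset W)
    (σS : {x // x ∈ S} → Ω₀) : ℝ :=
  ∑ σ : W → Ω₀, if (fun x : {x // x ∈ S} => σ x.1) = σS then p σ else 0

/-- joint marginal `p(σ_S, σ_T)`. -/
noncomputable def marg2 (p : (W → Ω₀) → ℝ) (S T : Finset W)
    (σS : {x // x ∈ S} → Ω₀) (σT : {x // x ∈ T} → Ω₀) : ℝ :=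
  ∑ σ : W → Ω₀,
    if (fun x : {x // x ∈ S} => σ x.1) = σS ∧ (fun x : {x // x ∈ T} => σ x.1) = σT
    then p σ else 0

/-- triple joint marginal `p(σ_S, σ_T, σ_U)`. -/
noncomputable def marg3 (p : (W → Ω₀) → ℝ) (S T U : Finset W)
    (σS : {x // x ∈ S} → Ω₀) (σT : {x // x ∈ T} → Ω₀) (σU : {x // x ∈ U} → Ω₀) : ℝ :=
  ∑ σ : W → Ω₀,
    if (fun x : {x // x ∈ S} => σ x.1) = σS ∧ (fun x : {x // x ∈ T} => σ x.1) = σT ∧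
        (fun x : {x // x ∈ U} => σ x.1) = σU
    then p σ else 0

/-- the inter-domain correlation `TV(A|C)`. -/
noncomputable def TVpair (p : (W → Ω₀) → ℝ) (A C : Finset W) : ℝ :=
  (1 / 2) * ∑ σA : {x // x ∈ A} → Ω₀, ∑ σC : {x // x ∈ C} → Ω₀,
    |marg2 p A C σA σC - marg p A σA * marg p C σC|

/-- the conditioned inter-domain correlation `TV_B(A|C)`; terms with vanishing
marginals drop out (conditional probabilities use the `x/0 = 0` convention). -/
noncomputable def TVcond (p : (W → Ω₀) → ℝ) (A B C : Finset W) : ℝ :=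
  ∑ σB : {x // x ∈ B} → Ω₀, ∑ σC : {x // x ∈ C} → Ω₀, marg2 p B C σB σC *
    ∑ σA : {x // x ∈ A} → Ω₀,
      max (marg3 p A B C σA σB σC / marg2 p B C σB σC
            - marg2 p A B σA σB / marg p B σB) 0

lemma marg_nonneg' (p : (W → Ω₀) → ℝ) (hp0 : ∀ σ, 0 ≤ p σ) (S : Finset W) (s) :
    0 ≤ marg p S s := by
  unfold marg
  exact Finset.sum_nonneg fun σ _ => by split_ifs <;> simp [hp0]

lemma marg2_nonneg' (p : (W → Ω₀) → ℝ) (hp0 : ∀ σ, 0 ≤ p σ) (S T : Finset W) (s t) :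
    0 ≤ marg2 p S T s t := by
  unfold marg2
  exact Finset.sum_nonneg fun σ _ => by split_ifs <;> simp [hp0]

lemma marg3_nonneg' (p : (W → Ω₀) → ℝ) (hp0 : ∀ σ, 0 ≤ p σ) (S T U : Finset W) (s t u) :
    0 ≤ marg3 p S T U s t u := by
  unfold marg3
  exact Finset.sum_nonneg fun σ _ => by split_ifs <;> simp [hp0]

lemma sum_marg3_left (p : (W → Ω₀) → ℝ) (S T U : Finset W) (t u) :
    ∑ s, marg3 p S T U s t u = marg2 p T U t u := by
  unfold marg3 marg2
  rw [Finset.sum_comm]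
  refine Finset.sum_congr rfl fun σ _ => ?_
  simp only [ite_and]
  rw [Finset.sum_ite_eq]
  simp

lemma sum_marg2_left (p : (W → Ω₀) → ℝ) (S T : Finset W) (t) :
    ∑ s, marg2 p S T s t = marg p T t := by
  unfold marg2 marg
  rw [Finset.sum_comm]
  refine Finset.sum_congr rfl fun σ _ => ?_
  simp only [ite_and]
  rw [Finset.sum_ite_eq]
  simp

lemma sum_marg2_right (p : (W → Ω₀) → ℝ) (S T : Finset W) (s) :
    ∑ t, marg2 p S T s t = marg p S s := by
  unfold marg2 marg
  rw [Finset.sum_comm]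
  refine Finset.sum_congr rfl fun σ _ => ?_
  by_cases h : (fun x : {x // x ∈ S} => σ x.1) = s
  · simp only [h, true_and]
    rw [Finset.sum_ite_eq]
    simp
  · simp [h]

lemma restr_union_iff (C D : Finset W) (σ : W → Ω₀) (e : {x // x ∈ C ∪ D} → Ω₀) :
    (fun x : {x // x ∈ C ∪ D} => σ x.1) = e ↔
    (fun x : {x // x ∈ C} => σ x.1) = (fun x => e ⟨x.1, Finset.mem_union_left D x.2⟩) ∧
    (fun x : {x // x ∈ D} => σ x.1) = (fun x => e ⟨x.1, Finset.mem_union_right C x.2⟩) := by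
  constructor
  · rintro rfl
    exact ⟨rfl, rfl⟩
  · rintro ⟨h1, h2⟩
    funext ⟨x, hx⟩
    rcases Finset.mem_union.1 hx with h | h
    · exact congrFun h1 ⟨x, h⟩
    · exact congrFun h2 ⟨x, h⟩

lemma sum_union_le (C D : Finset W)
    (G : ({x // x ∈ C} → Ω₀) → ({x // x ∈ D} → Ω₀) → ℝ) (hG : ∀ c d, 0 ≤ G c d) :
    ∑ e : {x // x ∈ C ∪ D} → Ω₀,
      G (fun x => e ⟨x.1, Finset.mem_union_left D x.2⟩)
        (fun x => e ⟨x.1, Finset.mem_union_right C x.2⟩) ≤ ∑ c, ∑ d, G c d := by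
  rw [← Fintype.sum_prod_type']
  let f : ({x // x ∈ C ∪ D} → Ω₀) → ({x // x ∈ C} → Ω₀) × ({x // x ∈ D} → Ω₀) := fun e =>
    (fun x => e ⟨x.1, Finset.mem_union_left D x.2⟩,
      fun x => e ⟨x.1, Finset.mem_union_right C x.2⟩)
  have hf : Function.Injective f := by
    intro e e' h
    have h1 := congrArg Prod.fst h
    have h2 := congrArg Prod.snd h
    funext ⟨x, hx⟩
    rcases Finset.mem_union.1 hx with h | h
    · exact congrFun h1 ⟨x, h⟩
    · exact congrFun h2 ⟨x, h⟩
  calc _ = ∑ y ∈ Finset.univ.image f, G y.1 y.2 :=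
        (Finset.sum_image (f := fun y => G y.1 y.2) (fun a _ b _ h => hf h)).symm
    _ ≤ _ := Finset.sum_le_sum_of_subset_of_nonneg (Finset.subset_univ _)
        (fun y _ _ => hG _ _)

/-- The pointwise estimate for fixed `(c,d)`. -/
lemma pointwise {α : Type*} [Fintype α] (x y z : α → ℝ) (q r : ℝ)
    (hx0 : ∀ a, 0 ≤ x a) (hq0 : 0 ≤ q) (hr0 : 0 ≤ r)
    (hx : ∑ a, x a = q) (hy : ∑ a, y a = r) (hqr : q ≤ r) :
    (1 / 2) * ∑ a, |x a - z a * q| ≤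
      q / r * ((1 / 2) * ∑ a, |y a - z a * r|) + q * ∑ a, max (x a / q - y a / r) 0 := by
  rcases hq0.eq_or_lt with h | hq
  · subst h
    have : ∀ a, x a = 0 := fun a =>
      (Finset.sum_eq_zero_iff_of_nonneg (fun i _ => hx0 i)).1 hx a (Finset.mem_univ a)
    simp [this]
  have hr : 0 < r := hq.trans_le hqr
  have key : ∑ a, |x a / q - y a / r| = 2 * ∑ a, max (x a / q - y a / r) 0 := by
    have h0 : ∑ a, (x a / q - y a / r) = 0 := by
      rw [Finset.sum_sub_distrib, ← Finset.sum_div, ← Finset.sum_div, hx, hy,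
        div_self hq.ne', div_self hr.ne', sub_self]
    have : ∀ t : ℝ, |t| = 2 * max t 0 - t := fun t => by
      rcases le_total 0 t with h | h
      · rw [abs_of_nonneg h, max_eq_left h]; ring
      · rw [abs_of_nonpos h, max_eq_right h]; ring
    simp only [this]
    rw [Finset.sum_sub_distrib, h0, ← Finset.mul_sum, sub_zero]
  have h1 : ∑ a, |x a - z a * q| ≤
      ∑ a, (q / r * |y a - z a * r| + q * |x a / q - y a / r|) := by
    refine Finset.sum_le_sum fun a _ => ?_
    have e : x a - z a * q = q / r * (y a - z a * r) + q * (x a / q - y a / r) := by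
      field_simp
      ring
    rw [e]
    refine (abs_add_le _ _).trans ?_
    rw [abs_mul, abs_mul, abs_of_pos hq, abs_of_pos (div_pos hq hr)]
  rw [Finset.sum_add_distrib, ← Finset.mul_sum, ← Finset.mul_sum, key] at h1
  linarith

/-- **Theorem 6.1 (iii)**: `TV(A|C ∪ D) ≤ TV(A|C) + TV_C(A|D)`. -/
theorem tv_subcocycle (p : (W → Ω₀) → ℝ)
    (hp0 : ∀ σ, 0 ≤ p σ) (hp1 : ∑ σ : W → Ω₀, p σ = 1)
    (A C D : Finset W)
    (hAC : Disjoint A C) (hAD : Disjoint A D) (hCD : Disjoint C D) :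
    TVpair p A (C ∪ D) ≤ TVpair p A C + TVcond p A C D := by
  have hF : TVpair p A (C ∪ D) ≤ ∑ c : {x // x ∈ C} → Ω₀, ∑ d : {x // x ∈ D} → Ω₀,
      (1 / 2) * ∑ a : {x // x ∈ A} → Ω₀,
        |marg3 p A C D a c d - marg p A a * marg2 p C D c d| := by
    refine le_trans (le_of_eq ?_) (sum_union_le C D (fun c d => (1 / 2) *
      ∑ a : {x // x ∈ A} → Ω₀, |marg3 p A C D a c d - marg p A a * marg2 p C D c d|)
      (fun c d => by positivity))
    unfold TVpair
    rw [Finset.sum_comm, Finset.mul_sum]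
    refine Finset.sum_congr rfl fun e _ => ?_
    congr 1
    refine Finset.sum_congr rfl fun a _ => ?_
    simp only [marg2, marg3, marg, restr_union_iff]
  refine hF.trans ?_
  have hT : TVpair p A C = ∑ c : {x // x ∈ C} → Ω₀, (1 / 2) *
      ∑ a : {x // x ∈ A} → Ω₀, |marg2 p A C a c - marg p A a * marg p C c| := by
    unfold TVpair
    rw [Finset.sum_comm, Finset.mul_sum]
  rw [hT]
  unfold TVcond
  rw [← Finset.sum_add_distrib]
  refine Finset.sum_le_sum fun c _ => ?_
  have hle : ∀ d, marg2 p C D c d ≤ marg p C c := fun d => by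
    rw [← sum_marg2_right p C D c]
    exact Finset.single_le_sum (f := fun d => marg2 p C D c d)
      (fun i _ => marg2_nonneg' p hp0 _ _ _ _) (Finset.mem_univ d)
  have hpt := fun d : {x // x ∈ D} → Ω₀ => pointwise (fun a => marg3 p A C D a c d)
    (fun a => marg2 p A C a c) (fun a => marg p A a) (marg2 p C D c d) (marg p C c)
    (fun a => marg3_nonneg' p hp0 _ _ _ _ _ _) (marg2_nonneg' p hp0 _ _ _ _)
    (marg_nonneg' p hp0 _ _) (sum_marg3_left p A C D c d) (sum_marg2_left p A C c) (hle d)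
  refine (Finset.sum_le_sum fun d _ => hpt d).trans ?_
  rw [Finset.sum_add_distrib, ← Finset.sum_mul, ← Finset.sum_div, sum_marg2_right]
  refine add_le_add ?_ le_rfl
  exact mul_le_of_le_one_left (by positivity) (div_self_le_one _)

end Stmt13
end

section
/- Single-site flip bound (Lemma of Section 6, inequality (6.10)). For any probability mass function p on Ω₀^W, any disjoint A, B ⊆ W and any u ∈ W ∖ (A ∪ B): TV_B(A|{u}) ≤ Σ_{σ_B : p(σ_B)>0} p(σ_B) · Σ_{s, ŝ ∈ Ω₀ with p(σ_B,s)>0 and p(σ_B,ŝ)>0} p(s|σ_B)·p(ŝ|σ_B) · (1/2)·Σ_{σ_A} | p(σ_A | σ_B, σ_u = s) − p(σ_A | σ_B, σ_u = ŝ) |, where p(σ_B, s) denotes the joint marginal probability of the configuration σ_B on B together with the value s at the site u, and p(s|σ_B) := p(σ_B,s)/p(σ_B). -/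
/-!
Statement 14 (Lemma of Section 6, inequality (6.10)): single-site flip bound.
-/

open scoped Classical

namespace Stmt14

variable {Ω₀ W : Type*} [Fintype Ω₀] [DecidableEq Ω₀] [Fintype W] [DecidableEq W]

/-- marginal `p(σ_S)`. -/
noncomputable def marg (p : (W → Ω₀) → ℝ) (S : Finset W)
    (σS : {x // x ∈ S} → Ω₀) : ℝ :=
  ∑ σ : W → Ω₀, if (fun x : {x // x ∈ S} => σ x.1) = σS then p σ else 0

/-- joint marginal `p(σ_S, σ_T)`. -/
noncomputable def marg2 (p : (W → Ω₀) → ℝ) (S T : Finset W)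
    (σS : {x // x ∈ S} → Ω₀) (σT : {x // x ∈ T} → Ω₀) : ℝ :=
  ∑ σ : W → Ω₀,
    if (fun x : {x // x ∈ S} => σ x.1) = σS ∧ (fun x : {x // x ∈ T} => σ x.1) = σT
    then p σ else 0

/-- triple joint marginal `p(σ_S, σ_T, σ_U)`. -/
noncomputable def marg3 (p : (W → Ω₀) → ℝ) (S T U : Finset W)
    (σS : {x // x ∈ S} → Ω₀) (σT : {x // x ∈ T} → Ω₀) (σU : {x // x ∈ U} → Ω₀) : ℝ :=
  ∑ σ : W → Ω₀,
    if (fun x : {x // x ∈ S} => σ x.1) = σS ∧ (fun x : {x // x ∈ T} => σ x.1) = σT ∧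
        (fun x : {x // x ∈ U} => σ x.1) = σU
    then p σ else 0

/-- the conditioned inter-domain correlation `TV_B(A|C)`. -/
noncomputable def TVcond (p : (W → Ω₀) → ℝ) (A B C : Finset W) : ℝ :=
  ∑ σB : {x // x ∈ B} → Ω₀, ∑ σC : {x // x ∈ C} → Ω₀, marg2 p B C σB σC *
    ∑ σA : {x // x ∈ A} → Ω₀,
      max (marg3 p A B C σA σB σC / marg2 p B C σB σC
            - marg2 p A B σA σB / marg p B σB) 0

/-- the joint marginal `p(σ_B, s)` of `σ_B` together with value `s` at site `u`. -/
noncomputable def margBu (p : (W → Ω₀) → ℝ) (B : Finset W)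
    (σB : {x // x ∈ B} → Ω₀) (u : W) (s : Ω₀) : ℝ :=
  marg2 p B {u} σB fun _ => s

/-- the joint marginal `p(σ_A, σ_B, s)`. -/
noncomputable def margABu (p : (W → Ω₀) → ℝ) (A B : Finset W)
    (σA : {x // x ∈ A} → Ω₀) (σB : {x // x ∈ B} → Ω₀) (u : W) (s : Ω₀) : ℝ :=
  marg3 p A B {u} σA σB fun _ => s

/-- Abstract form of the bound, for a fixed boundary configuration. -/
theorem abstract_bound {X S : Type*} [Fintype X] [Fintype S] (a : X → S → ℝ)
    (ha : ∀ x s, 0 ≤ a x s) (b : S → ℝ) (hb : ∀ s, b s = ∑ x, a x s) (M : ℝ)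
    (hM : M = ∑ s, b s) (c : X → ℝ) (hc : ∀ x, c x = ∑ s, a x s) :
    ∑ s, b s * ∑ x, max (a x s / b s - c x / M) 0 ≤
      M * ∑ s, ∑ t, (b s / M) * (b t / M) *
        ((1 / 2) * ∑ x, |a x s / b s - a x t / b t|) := by
  have hb0 : ∀ s, 0 ≤ b s := fun s => by
    rw [hb]; exact Finset.sum_nonneg fun x _ => ha x s
  have hM0 : 0 ≤ M := by rw [hM]; exact Finset.sum_nonneg fun s _ => hb0 s
  rcases hM0.eq_or_lt with h | hMp
  · have hz : ∀ s, b s = 0 := fun s =>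
      (Finset.sum_eq_zero_iff_of_nonneg (fun s _ => hb0 s)).1 (hM.symm.trans h.symm) s
        (Finset.mem_univ s)
    simp [hz, ← h]
  have hab : ∀ x t, b t * (a x t / b t) = a x t := fun x t => by
    by_cases h : b t = 0
    · have h1 : ∑ x, a x t = 0 := by rw [← hb, h]
      have h2 := (Finset.sum_eq_zero_iff_of_nonneg (fun x _ => ha x t)).1 h1 x
        (Finset.mem_univ x)
      simp [h, h2]
    · field_simp
  rw [Finset.mul_sum]
  refine Finset.sum_le_sum fun s _ => ?_
  rcases (hb0 s).eq_or_lt with h | hs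
  · simp [← h]
  have hone : ∑ t, b t / M = 1 := by
    rw [← Finset.sum_div, ← hM, div_self hMp.ne']
  have hsum0 : ∑ x, (a x s / b s - c x / M) = 0 := by
    rw [Finset.sum_sub_distrib, ← Finset.sum_div, ← Finset.sum_div, ← hb, div_self hs.ne']
    have : ∑ x, c x = M := by
      simp only [hc, hM, hb]
      exact Finset.sum_comm
    rw [this, div_self hMp.ne', sub_self]
  have hmax : ∑ x, max (a x s / b s - c x / M) 0
      = (1 / 2) * ∑ x, |a x s / b s - c x / M| := by
    have h1 : ∀ y : ℝ, max y 0 = (1 / 2) * |y| + (1 / 2) * y := fun y => by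
      rcases le_total y 0 with h | h
      · rw [max_eq_right h, abs_of_nonpos h]; ring
      · rw [max_eq_left h, abs_of_nonneg h]; ring
    simp only [h1]
    rw [Finset.sum_add_distrib, ← Finset.mul_sum, ← Finset.mul_sum, hsum0]
    ring
  have habs : ∀ x, |a x s / b s - c x / M| ≤
      ∑ t, (b t / M) * |a x s / b s - a x t / b t| := fun x => by
    have h1 : a x s / b s - c x / M = ∑ t, (b t / M) * (a x s / b s - a x t / b t) := by
      simp only [mul_sub]
      rw [Finset.sum_sub_distrib, ← Finset.sum_mul, hone, one_mul, hc, Finset.sum_div]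
      congr 1
      refine Finset.sum_congr rfl fun t _ => ?_
      rw [div_mul_eq_mul_div, hab]
    rw [h1]
    refine (Finset.abs_sum_le_sum_abs _ _).trans (Finset.sum_le_sum fun t _ => ?_)
    rw [abs_mul, abs_of_nonneg (div_nonneg (hb0 t) hM0)]
  rw [hmax]
  have hfin : M * ∑ t, (b s / M) * (b t / M) * ((1 / 2) * ∑ x, |a x s / b s - a x t / b t|)
      = b s * ((1 / 2) * ∑ x, ∑ t, (b t / M) * |a x s / b s - a x t / b t|) := by
    rw [Finset.sum_comm]
    simp only [← Finset.mul_sum]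
    simp only [Finset.mul_sum (Finset.univ : Finset S)]
    refine Finset.sum_congr rfl fun t _ => ?_
    field_simp
  rw [hfin]
  exact mul_le_mul_of_nonneg_left
    (mul_le_mul_of_nonneg_left (Finset.sum_le_sum fun x _ => habs x) (by norm_num)) (hb0 s)

/-- Summing an indicator over the values of an observable. -/
theorem sum_indicator {X Y : Type*} [Fintype X] [Fintype Y] (p : X → ℝ) (g : X → Y)
    (P : X → Prop) (Q : Y → X → Prop) (hQ : ∀ y x, Q y x ↔ (P x ∧ g x = y)) 
    (d1 : DecidablePred P) (d2 : ∀ y, DecidablePred (Q y)) :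
    (∑ x, if P x then p x else 0) = ∑ y, ∑ x, if Q y x then p x else 0 := by
  rw [Finset.sum_comm]
  refine Finset.sum_congr rfl fun x _ => ?_
  rw [Finset.sum_eq_single (g x)]
  · simp [hQ]
  · intro y _ hy
    rw [if_neg]
    rw [hQ]
    exact fun h => hy h.2.symm
  · simp

/-- **Inequality (6.10)**: the single-site flip bound.  All sums may be taken
unrestricted: terms corresponding to `p(σ_B) = 0` or `p(σ_B,s) = 0` carry
vanishing factors, by the `x/0 = 0` convention. -/
theorem single_site_flip_bound (p : (W → Ω₀) → ℝ)
    (hp0 : ∀ σ, 0 ≤ p σ) (hp1 : ∑ σ : W → Ω₀, p σ = 1)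
    (A B : Finset W) (u : W) (hAB : Disjoint A B) (hu : u ∉ A ∪ B) :
    TVcond p A B {u} ≤
      ∑ σB : {x // x ∈ B} → Ω₀, marg p B σB *
        ∑ s : Ω₀, ∑ t : Ω₀,
          (margBu p B σB u s / marg p B σB) * (margBu p B σB u t / marg p B σB) *
            ((1 / 2) * ∑ σA : {x // x ∈ A} → Ω₀,
              |margABu p A B σA σB u s / margBu p B σB u s -
                margABu p A B σA σB u t / margBu p B σB u t|) := by
  unfold TVcond
  refine Finset.sum_le_sum fun σB _ => ?_
  have key : ∀ (σ : W → Ω₀) (s : Ω₀),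
      ((fun x : {x // x ∈ ({u} : Finset W)} => σ x.1) = fun _ => s) ↔ σ u = s := by
    intro σ s
    constructor
    · intro h
      exact congrFun h ⟨u, Finset.mem_singleton_self u⟩
    · intro h
      funext x
      have hx : x.1 = u := Finset.mem_singleton.1 x.2
      simp only [hx, h]
  let e : Ω₀ ≃ ({x // x ∈ ({u} : Finset W)} → Ω₀) :=
    { toFun := fun s _ => s
      invFun := fun f => f ⟨u, Finset.mem_singleton_self u⟩
      left_inv := fun s => rfl
      right_inv := fun f => by
        funext x
        have hx : x = ⟨u, Finset.mem_singleton_self u⟩ :=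
          Subtype.ext (Finset.mem_singleton.1 x.2)
        rw [hx] }
  rw [← Equiv.sum_comp e]
  refine abstract_bound (fun σA s => margABu p A B σA σB u s) ?_
    (fun s => margBu p B σB u s) ?_ (marg p B σB) ?_ (fun σA => marg2 p A B σA σB) ?_
  · intro x s
    refine Finset.sum_nonneg fun σ _ => ?_
    split_ifs
    · exact hp0 σ
    · exact le_rfl
  · intro s
    refine sum_indicator p (fun σ (x : {x // x ∈ A}) => σ x.1) _ _ ?_ _ _
    intro y σ
    tauto
  · refine sum_indicator p (fun σ => σ u) _ _ ?_ _ _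
    intro y σ
    rw [key]
  · intro σA
    refine sum_indicator p (fun σ => σ u) _ _ ?_ _ _
    intro y σ
    rw [key]
    tauto

end Stmt14
end

section
/- Fannes-type entropy bound (Proposition A.1). Let ρ and ρ̂ be two n×n complex positive semidefinite Hermitian matrices of trace 1 with ρ ≠ ρ̂. Then |S(ρ) − S(ρ̂)| ≤ (1/2)·‖ρ − ρ̂‖₁ · ( 1 + ln( 2·rank(ρ − ρ̂) / ‖ρ − ρ̂‖₁ ) ). -/
/-!
Statement 17 (Proposition A.1): Fannes-type entropy bound.
-/

open scoped ComplexOrder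

namespace Stmt17

/-- von Neumann entropy of a Hermitian matrix (convention `0·ln 0 = 0`). -/
noncomputable def vN {n : Type*} [Fintype n] [DecidableEq n] (M : Matrix n n ℂ) : ℝ :=
  if h : M.IsHermitian then -∑ i, h.eigenvalues i * Real.log (h.eigenvalues i) else 0

/-- trace norm of a Hermitian matrix: sum of absolute values of eigenvalues. -/
noncomputable def trNorm {n : Type*} [Fintype n] [DecidableEq n] (M : Matrix n n ℂ) : ℝ :=
  if h : M.IsHermitian then ∑ i, |h.eigenvalues i| else 0

section Helpers

open MeasureTheory Set Matrix

lemma int_ind (c : ℝ) (h0 : 0 ≤ c) (h1 : c ≤ 1) (f : ℝ → ℝ) :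
    ∫ x in Ioc (0:ℝ) 1, (Iio c).indicator f x = ∫ x in (0:ℝ)..c, f x := by
  rw [setIntegral_indicator measurableSet_Iio, intervalIntegral.integral_of_le h0,
    ← integral_Ioc_eq_integral_Ioo.symm]
  congr 2
  ext x
  simp only [mem_inter_iff, mem_Ioc, mem_Iio, mem_Ioo]
  constructor
  · rintro ⟨⟨a, b⟩, c⟩; exact ⟨a, c⟩
  · rintro ⟨a, b⟩; exact ⟨⟨a, by linarith⟩, b⟩

lemma int_log_on : IntegrableOn (fun x => - Real.log x) (Ioc (0:ℝ) 1) := by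
  have := (intervalIntegral.intervalIntegrable_log' (a := 0) (b := 1)).neg
  rwa [intervalIntegrable_iff_integrableOn_Ioc_of_le zero_le_one] at this

lemma int_ind_log (c : ℝ) (h0 : 0 ≤ c) (h1 : c ≤ 1) :
    ∫ x in Ioc (0:ℝ) 1, (Iio c).indicator (fun x => - Real.log x) x = c - c * Real.log c := by
  rw [int_ind c h0 h1, intervalIntegral.integral_neg, integral_log]
  simp

lemma int_ind_const (c : ℝ) (h0 : 0 ≤ c) (h1 : c ≤ 1) (k : ℝ) :
    ∫ x in Ioc (0:ℝ) 1, (Iio c).indicator (fun _ => k) x = c * k := by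
  rw [int_ind c h0 h1]
  simp

lemma int_ind_const_le (c : ℝ) (h0 : 0 ≤ c) :
    ∫ x in Ioc (0:ℝ) 1, (Iio c).indicator (fun _ => (1:ℝ)) x ≤ c := by
  rcases le_total c 1 with h | h
  · rw [int_ind_const c h0 h]; simp
  · calc _ ≤ ∫ x in Ioc (0:ℝ) 1, (1:ℝ) := by
          apply integral_mono_of_nonneg
          · exact Filter.Eventually.of_forall fun x => indicator_nonneg (fun _ _ => zero_le_one) _
          · exact integrable_const _
          · exact Filter.Eventually.of_forall fun x => indicator_le_self' (fun _ _ => zero_le_one) _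
      _ ≤ c := by simpa using h

lemma core {ι : Type*} [Fintype ι] (p q t : ι → ℝ) (T r : ℝ)
    (hp0 : ∀ i, 0 ≤ p i) (hp1 : ∀ i, p i ≤ 1) (hq0 : ∀ i, 0 ≤ q i) (hq1 : ∀ i, q i ≤ 1)
    (ht0 : ∀ i, 0 ≤ t i) (hp : ∑ i, p i = 1) (hq : ∑ i, q i = 1) (ht : ∑ i, t i = 1 + T)
    (hT : 0 < T) (hTr : T ≤ r)
    (hpt : ∀ x, ∑ i, (Iio (p i)).indicator (fun _ => (1:ℝ)) x
      ≤ ∑ i, (Iio (t i)).indicator (fun _ => (1:ℝ)) x)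
    (hqt : ∀ x, ∑ i, (Iio (q i)).indicator (fun _ => (1:ℝ)) x
      ≤ ∑ i, (Iio (t i)).indicator (fun _ => (1:ℝ)) x)
    (htq : ∀ x, ∑ i, (Iio (t i)).indicator (fun _ => (1:ℝ)) x
      ≤ ∑ i, (Iio (q i)).indicator (fun _ => (1:ℝ)) x + r) :
    -∑ i, p i * Real.log (p i) - (-∑ i, q i * Real.log (q i)) ≤ T * (1 + Real.log (r / T)) := by
  have hr : 0 < r := lt_of_lt_of_le hT hTr
  set a := T / r with ha
  have ha0 : 0 < a := by positivity
  have ha1 : a ≤ 1 := (div_le_one hr).2 hTr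
  have hla : Real.log a ≤ 0 := Real.log_nonpos ha0.le ha1
  have hlog : Real.log (r / T) = - Real.log a := by
    rw [ha, ← Real.log_inv, inv_div]
  have hra : r * a = T := by rw [ha]; field_simp
  have i1 : ∀ c : ℝ, IntegrableOn ((Iio c).indicator (fun x => - Real.log x)) (Ioc (0:ℝ) 1) :=
    fun c => Integrable.indicator int_log_on measurableSet_Iio
  have i2 : ∀ c k : ℝ, IntegrableOn ((Iio c).indicator (fun _ => k)) (Ioc (0:ℝ) 1) :=
    fun c k => Integrable.indicator (integrable_const _) measurableSet_Iio
  have j1 : IntegrableOn (fun x => (- Real.log a) *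
      ((∑ i, (Iio (t i)).indicator (fun _ => (1:ℝ)) x)
        - ∑ i, (Iio (q i)).indicator (fun _ => (1:ℝ)) x)) (Ioc (0:ℝ) 1) :=
    ((integrable_finsetSum _ fun i _ => i2 _ _).sub
        (integrable_finsetSum _ fun i _ => i2 _ _)).const_mul _
  have j2 : IntegrableOn (fun x => r * ((Iio a).indicator (fun x => - Real.log x) x
          + (Iio a).indicator (fun _ => Real.log a) x)) (Ioc (0:ℝ) 1) :=
    ((i1 _).add (i2 _ _)).const_mul _
  have key : ∫ x in Ioc (0:ℝ) 1, ((∑ i, (Iio (p i)).indicator (fun x => - Real.log x) x)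
        - ∑ i, (Iio (q i)).indicator (fun x => - Real.log x) x)
      ≤ ∫ x in Ioc (0:ℝ) 1, ((- Real.log a) * ((∑ i, (Iio (t i)).indicator (fun _ => (1:ℝ)) x)
        - ∑ i, (Iio (q i)).indicator (fun _ => (1:ℝ)) x)
        + r * ((Iio a).indicator (fun x => - Real.log x) x
          + (Iio a).indicator (fun _ => Real.log a) x)) := by
    apply setIntegral_mono_on
    · exact (integrable_finsetSum _ fun i _ => i1 _).sub (integrable_finsetSum _ fun i _ => i1 _)
    · exact (((integrable_finsetSum _ fun i _ => i2 _ _).sub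
        (integrable_finsetSum _ fun i _ => i2 _ _)).const_mul _).add
        (((i1 _).add (i2 _ _)).const_mul _)
    · exact measurableSet_Ioc
    · rintro x ⟨hx0, hx1⟩
      have e : ∀ u : ι → ℝ, ∑ i, (Iio (u i)).indicator (fun x => - Real.log x) x
          = (- Real.log x) * ∑ i, (Iio (u i)).indicator (fun _ => (1:ℝ)) x := by
        intro u
        rw [Finset.mul_sum]
        refine Finset.sum_congr rfl fun i _ => ?_
        simp [indicator_apply]
      rw [e, e]
      have h1 := hpt x
      have h2 := hqt x
      have h3 := htq x
      set Np := ∑ i, (Iio (p i)).indicator (fun _ => (1:ℝ)) x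
      set Nq := ∑ i, (Iio (q i)).indicator (fun _ => (1:ℝ)) x
      set Nt := ∑ i, (Iio (t i)).indicator (fun _ => (1:ℝ)) x
      have hlx : 0 ≤ - Real.log x := by have := Real.log_nonpos hx0.le hx1; linarith
      have s1 : (- Real.log x) * (Np - Nq) ≤ (- Real.log x) * (Nt - Nq) :=
        mul_le_mul_of_nonneg_left (by linarith) hlx
      by_cases hxa : x < a
      · have : Real.log x ≤ Real.log a := Real.log_le_log hx0 hxa.le
        simp only [indicator_apply, mem_Iio, hxa, if_true]
        nlinarith
      · have : Real.log a ≤ Real.log x := Real.log_le_log ha0 (not_lt.1 hxa)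
        simp only [indicator_apply, mem_Iio, hxa, if_false]
        nlinarith
  rw [integral_sub (integrable_finsetSum _ fun i _ => i1 _) (integrable_finsetSum _ fun i _ => i1 _),
    integral_finsetSum _ (fun i _ => i1 _), integral_finsetSum _ (fun i _ => i1 _),
    integral_add j1 j2,
    integral_const_mul, integral_const_mul, integral_add (i1 _) (i2 _ _),
    integral_sub (integrable_finsetSum _ fun i _ => i2 _ _) (integrable_finsetSum _ fun i _ => i2 _ _),
    integral_finsetSum _ (fun i _ => i2 _ _), integral_finsetSum _ (fun i _ => i2 _ _),
    int_ind_log a ha0.le ha1, int_ind_const a ha0.le ha1] at key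
  simp only [int_ind_log _ (hp0 _) (hp1 _), int_ind_log _ (hq0 _) (hq1 _),
    int_ind_const _ (hq0 _) (hq1 _), Finset.sum_sub_distrib, mul_one, hp, hq] at key
  have ht' : ∑ i, ∫ x in Ioc (0:ℝ) 1, (Iio (t i)).indicator (fun _ => (1:ℝ)) x ≤ 1 + T := by
    rw [← ht]; exact Finset.sum_le_sum fun i _ => int_ind_const_le _ (ht0 i)
  rw [hlog]
  have : r * (a - a * Real.log a + a * Real.log a) = T := by rw [← hra]; ring
  rw [this] at key
  nlinarith

lemma quad {n : ℕ} {A : Matrix (Fin n) (Fin n) ℂ} (hA : A.IsHermitian) (v : Fin n → ℂ) :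
    (star v ⬝ᵥ A *ᵥ v).re = ∑ i, hA.eigenvalues i *
      Complex.normSq (((star (hA.eigenvectorUnitary : Matrix (Fin n) (Fin n) ℂ)) *ᵥ v) i) := by
  set U := (hA.eigenvectorUnitary : Matrix (Fin n) (Fin n) ℂ) with hU
  have h : star v ⬝ᵥ A *ᵥ v = star (star U *ᵥ v) ⬝ᵥ
      (diagonal (RCLike.ofReal ∘ hA.eigenvalues : Fin n → ℂ) *ᵥ (star U *ᵥ v)) := by
    conv_lhs => rw [hA.spectral_theorem, Unitary.conjStarAlgAut_apply]
    rw [star_mulVec, ← dotProduct_mulVec]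
    simp only [mulVec_mulVec, star_eq_conjTranspose, conjTranspose_conjTranspose, mul_assoc, hU]
  rw [h]
  generalize star U *ᵥ v = w
  simp only [dotProduct, mulVec_diagonal, Complex.re_sum]
  refine Finset.sum_congr rfl fun i _ => ?_
  simp [Complex.normSq_apply]
  ring

lemma nrm {n : ℕ} {A : Matrix (Fin n) (Fin n) ℂ} (hA : A.IsHermitian) (v : Fin n → ℂ) :
    (star v ⬝ᵥ v).re = ∑ i, 
      Complex.normSq (((star (hA.eigenvectorUnitary : Matrix (Fin n) (Fin n) ℂ)) *ᵥ v) i) := by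
  set U := (hA.eigenvectorUnitary : Matrix (Fin n) (Fin n) ℂ) with hU
  have hUU : U * star U = 1 := Unitary.mul_star_self_of_mem hA.eigenvectorUnitary.2
  have h : star v ⬝ᵥ v = star (star U *ᵥ v) ⬝ᵥ (star U *ᵥ v) := by
    rw [star_mulVec, ← dotProduct_mulVec, mulVec_mulVec, star_eq_conjTranspose,
      conjTranspose_conjTranspose, ← star_eq_conjTranspose, hUU, one_mulVec]
  rw [h]
  generalize star U *ᵥ v = w
  simp only [dotProduct, Complex.re_sum]
  refine Finset.sum_congr rfl fun i _ => ?_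
  simp [Complex.normSq_apply]

lemma count_card {n : ℕ} (u : Fin n → ℝ) (x : ℝ) :
    ∑ i, (Iio (u i)).indicator (fun _ => (1:ℝ)) x = (Fintype.card {i // x < u i} : ℝ) := by
  simp only [indicator_apply, mem_Iio]
  rw [Finset.sum_boole, Fintype.card_subtype]

lemma count_le {n : ℕ} {A B : Matrix (Fin n) (Fin n) ℂ} (hA : A.IsHermitian) (hB : B.IsHermitian)
    {E : Type} [AddCommGroup E] [Module ℂ E] [FiniteDimensional ℂ E] (κ : (Fin n → ℂ) →ₗ[ℂ] E)
    (hκ : ∀ v, κ v = 0 → (star v ⬝ᵥ A *ᵥ v).re ≤ (star v ⬝ᵥ B *ᵥ v).re) (x : ℝ) :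
    ∑ i, (Iio (hA.eigenvalues i)).indicator (fun _ => (1:ℝ)) x ≤
    ∑ i, (Iio (hB.eigenvalues i)).indicator (fun _ => (1:ℝ)) x + Module.finrank ℂ E := by
  rw [count_card, count_card]
  set UA := star (hA.eigenvectorUnitary : Matrix (Fin n) (Fin n) ℂ) with hUA
  set UB := star (hB.eigenvectorUnitary : Matrix (Fin n) (Fin n) ℂ) with hUB
  let L : (Fin n → ℂ) →ₗ[ℂ] (({i // ¬ x < hA.eigenvalues i} → ℂ) ×
      ({i // x < hB.eigenvalues i} → ℂ)) × E :=
    ((LinearMap.funLeft ℂ ℂ Subtype.val ∘ₗ UA.mulVecLin).prod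
      (LinearMap.funLeft ℂ ℂ Subtype.val ∘ₗ UB.mulVecLin)).prod κ
  have hL : Function.Injective L := by
    rw [← LinearMap.ker_eq_bot, LinearMap.ker_eq_bot']
    intro v hv
    have h1 := congrArg (fun z => z.1.1) hv
    have h2 := congrArg (fun z => z.1.2) hv
    have h3 : κ v = 0 := congrArg (fun z => z.2) hv
    have g1 : ∀ i, ¬ x < hA.eigenvalues i → (UA *ᵥ v) i = 0 := fun i hi => congrFun h1 ⟨i, hi⟩
    have g2 : ∀ i, x < hB.eigenvalues i → (UB *ᵥ v) i = 0 := fun i hi => congrFun h2 ⟨i, hi⟩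
    have h4 := hκ v h3
    rw [quad hA, quad hB, ← hUA, ← hUB] at h4
    have nA := nrm hA v
    have nB := nrm hB v
    rw [← hUA] at nA
    rw [← hUB] at nB
    have b1 : ∑ i, hB.eigenvalues i * Complex.normSq ((UB *ᵥ v) i)
        ≤ x * (star v ⬝ᵥ v).re := by
      rw [nB, Finset.mul_sum]
      refine Finset.sum_le_sum fun i _ => ?_
      by_cases hi : x < hB.eigenvalues i
      · simp [g2 i hi]
      · exact mul_le_mul_of_nonneg_right (not_lt.1 hi) (Complex.normSq_nonneg _)
    have b2 : ∑ i, (hA.eigenvalues i - x) * Complex.normSq ((UA *ᵥ v) i) ≤ 0 := by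
      simp only [sub_mul, Finset.sum_sub_distrib]
      rw [← Finset.mul_sum, ← nA]
      linarith
    have b3 : ∀ i ∈ Finset.univ, 0 ≤ (hA.eigenvalues i - x) * Complex.normSq ((UA *ᵥ v) i) := by
      intro i _
      by_cases hi : x < hA.eigenvalues i
      · exact mul_nonneg (by linarith) (Complex.normSq_nonneg _)
      · simp [g1 i hi]
    have b4 := (Finset.sum_eq_zero_iff_of_nonneg b3).1 (le_antisymm b2 (Finset.sum_nonneg b3))
    have b5 : ∀ i, (UA *ᵥ v) i = 0 := by
      intro i
      by_cases hi : x < hA.eigenvalues i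
      · have := b4 i (Finset.mem_univ _)
        rcases mul_eq_zero.1 this with h | h
        · linarith
        · exact Complex.normSq_eq_zero.1 h
      · exact g1 i hi
    have b6 : (star v ⬝ᵥ v).re = 0 := by rw [nA]; simp [b5]
    rw [← dotProduct_star_self_eq_zero]
    have : 0 ≤ star v ⬝ᵥ v := dotProduct_star_self_nonneg v
    rw [Complex.le_def] at this
    exact Complex.ext b6 this.2.symm
  have := LinearMap.finrank_le_finrank_of_injective hL
  rw [Module.finrank_prod, Module.finrank_prod, Module.finrank_fintype_fun_eq_card,
    Module.finrank_fintype_fun_eq_card, Module.finrank_fintype_fun_eq_card,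
    Fintype.card_subtype_compl] at this
  have h5 := Fintype.card_subtype_le (fun i => x < hA.eigenvalues i)
  have : Fintype.card {i // x < hA.eigenvalues i} ≤ 
    Fintype.card {i // x < hB.eigenvalues i} + Module.finrank ℂ E := by omega
  exact_mod_cast this

lemma count_mono {n : ℕ} {A B : Matrix (Fin n) (Fin n) ℂ} (hA : A.IsHermitian) (hB : B.IsHermitian)
    (h : (B - A).PosSemidef) (x : ℝ) :
    ∑ i, (Iio (hA.eigenvalues i)).indicator (fun _ => (1:ℝ)) x ≤
    ∑ i, (Iio (hB.eigenvalues i)).indicator (fun _ => (1:ℝ)) x := by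
  have := count_le hA hB (0 : (Fin n → ℂ) →ₗ[ℂ] (Fin 0 → ℂ)) (fun v _ => by
    have := h.dotProduct_mulVec_nonneg v
    rw [sub_mulVec, dotProduct_sub, Complex.le_def] at this
    simpa using this.1) x
  simpa using this

lemma count_rank {n : ℕ} {A B : Matrix (Fin n) (Fin n) ℂ} (hA : A.IsHermitian) (hB : B.IsHermitian)
    (x : ℝ) :
    ∑ i, (Iio (hA.eigenvalues i)).indicator (fun _ => (1:ℝ)) x ≤
    ∑ i, (Iio (hB.eigenvalues i)).indicator (fun _ => (1:ℝ)) x + (A - B).rank := by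
  refine count_le hA hB (A - B).mulVecLin.rangeRestrict (fun v hv => ?_) x
  have h : (A - B) *ᵥ v = 0 := congrArg Subtype.val hv
  rw [sub_mulVec, sub_eq_zero] at h
  rw [h]

lemma sum_eig {n : ℕ} {A : Matrix (Fin n) (Fin n) ℂ} (hA : A.IsHermitian) :
    ∑ i, hA.eigenvalues i = A.trace.re := by
  rw [hA.trace_eq_sum_eigenvalues]; simp

/-- Jordan decomposition data. -/
lemma jordan {n : ℕ} (ρ σ : Matrix (Fin n) (Fin n) ℂ) (hρ : ρ.PosSemidef) (hσ : σ.PosSemidef)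
    (hD : (ρ - σ).IsHermitian) :
    ∃ P Q : Matrix (Fin n) (Fin n) ℂ, P.PosSemidef ∧ Q.PosSemidef ∧ ρ - σ = P - Q ∧
      P.trace.re = ∑ i, max (hD.eigenvalues i) 0 ∧ Q.trace.re = ∑ i, max (-hD.eigenvalues i) 0 ∧
      P.rank ≤ (ρ - σ).rank ∧ Q.rank ≤ (ρ - σ).rank ∧ P.trace.re ≤ ρ.trace.re := by
  set U := (hD.eigenvectorUnitary : Matrix (Fin n) (Fin n) ℂ) with hU
  have hUU : star U * U = 1 := Unitary.star_mul_self_of_mem hD.eigenvectorUnitary.2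
  have hUU' : U * star U = 1 := Unitary.mul_star_self_of_mem hD.eigenvectorUnitary.2
  let F : (Fin n → ℝ) → Matrix (Fin n) (Fin n) ℂ := fun d =>
    U * diagonal (fun i => (d i : ℂ)) * star U
  have hps : ∀ d : Fin n → ℝ, (∀ i, 0 ≤ d i) → (F d).PosSemidef := by
    intro d hd
    refine PosSemidef.mul_mul_conjTranspose_same (posSemidef_diagonal_iff.2 fun i => ?_) U
    exact_mod_cast hd i
  have htr : ∀ d : Fin n → ℝ, (F d).trace.re = ∑ i, d i := by
    intro d
    simp only [F]
    rw [trace_mul_comm, ← mul_assoc, hUU, one_mul, trace_diagonal]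
    simp
  have hrk : ∀ d : Fin n → ℝ, (∀ i, hD.eigenvalues i = 0 → d i = 0) →
      (F d).rank ≤ (ρ - σ).rank := by
    intro d hd
    rw [hD.rank_eq_card_non_zero_eigs]
    refine (rank_mul_le_left _ _).trans ((rank_mul_le_right _ _).trans ?_)
    rw [rank_diagonal]
    refine Fintype.card_subtype_mono _ _ ?_
    intro i hi h0
    exact hi (by simp [hd i h0])
  have hsp : ρ - σ = F hD.eigenvalues := by
    conv_lhs => rw [hD.spectral_theorem, Unitary.conjStarAlgAut_apply]
    rfl
  refine ⟨F fun i => max (hD.eigenvalues i) 0, F fun i => max (-hD.eigenvalues i) 0,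
    hps _ fun i => le_max_right _ _, hps _ fun i => le_max_right _ _, ?_, htr _, htr _,
    hrk _ fun i h => by simp [h], hrk _ fun i h => by simp [h], ?_⟩
  · refine hsp.trans ?_
    simp only [F]
    rw [← sub_mul, ← mul_sub, diagonal_sub]
    congr 3
    ext i
    rw [← Complex.ofReal_sub]
    congr 1
    rcases le_total 0 (hD.eigenvalues i) with h | h
    · rw [max_eq_left h, max_eq_right (by linarith)]; ring
    · rw [max_eq_right h, max_eq_left (by linarith)]; ring
  · rw [htr]
    have e1 : ρ.trace = (star U * ρ * U).trace := by
      rw [trace_mul_comm, ← mul_assoc, hUU', one_mul]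
    rw [e1, trace, Complex.re_sum]
    refine Finset.sum_le_sum fun i _ => ?_
    have p1 : 0 ≤ (star U * ρ * U) i i := (hρ.conjTranspose_mul_mul_same U).diag_nonneg
    have p2 : 0 ≤ (star U * σ * U) i i := (hσ.conjTranspose_mul_mul_same U).diag_nonneg
    have e2 : star U * ρ * U - star U * σ * U = diagonal (fun i => (hD.eigenvalues i : ℂ)) := by
      rw [← sub_mul, ← mul_sub]
      refine (congrArg (fun z => star U * z * U) hsp).trans ?_
      simp only [F]
      rw [← mul_assoc, ← mul_assoc, hUU, one_mul, mul_assoc, hUU, mul_one]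
    have e3 := congrArg Complex.re (congrFun (congrFun e2 i) i)
    simp only [Matrix.sub_apply, diagonal_apply_eq, Complex.sub_re, Complex.ofReal_re] at e3
    rw [Complex.le_def] at p1 p2
    simp only [diag_apply]
    have := p1.1
    have := p2.1
    simp only [Complex.zero_re] at *
    exact max_le (by linarith) (by linarith)

lemma eig_le_one {n : ℕ} {A : Matrix (Fin n) (Fin n) ℂ} (hA : A.PosSemidef) (h : A.trace = 1)
    (i : Fin n) : hA.1.eigenvalues i ≤ 1 := by
  have h1 : ∑ i, hA.1.eigenvalues i = 1 := by rw [sum_eig, h]; simp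
  rw [← h1]
  exact Finset.single_le_sum (fun j _ => hA.eigenvalues_nonneg j) (Finset.mem_univ i)

lemma vN_sub_le {n : ℕ} (ρ σ P Q : Matrix (Fin n) (Fin n) ℂ) (hρ : ρ.PosSemidef)
    (hσ : σ.PosSemidef) (hP : P.PosSemidef) (hQ : Q.PosSemidef) (hPQ : ρ - σ = P - Q)
    (h1 : ρ.trace = 1) (h2 : σ.trace = 1) (T : ℝ) (r : ℕ) (hT : 0 < T) (hTr : T ≤ r)
    (hPT : P.trace.re = T) (hPr : P.rank ≤ r) :
    vN ρ - vN σ ≤ T * (1 + Real.log (r / T)) := by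
  have hτ : (σ + P).PosSemidef := hσ.add hP
  have e1 : σ + P - ρ = Q := by
    have : ρ = P - Q + σ := by rw [← hPQ]; abel
    rw [this]; abel
  have e2 : σ + P - σ = P := by abel
  simp only [vN, dif_pos hρ.1, dif_pos hσ.1]
  refine core hρ.1.eigenvalues hσ.1.eigenvalues hτ.1.eigenvalues T r
    hρ.eigenvalues_nonneg (eig_le_one hρ h1) hσ.eigenvalues_nonneg (eig_le_one hσ h2)
    hτ.eigenvalues_nonneg (by rw [sum_eig, h1]; simp) (by rw [sum_eig, h2]; simp)
    (by rw [sum_eig, trace_add, Complex.add_re, h2, hPT]; simp) hT hTr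
    (count_mono hρ.1 hτ.1 (by rw [e1]; exact hQ)) (count_mono hσ.1 hτ.1 (by rw [e2]; exact hP))
    (fun x => ?_)
  refine (count_rank hτ.1 hσ.1 x).trans ?_
  rw [e2]
  have : (P.rank : ℝ) ≤ r := by exact_mod_cast hPr
  linarith

end Helpers

/-- **Proposition A.1** (Fannes-type entropy bound). -/
theorem fannes_type_bound {n : ℕ} (ρ ρh : Matrix (Fin n) (Fin n) ℂ)
    (hρ : ρ.PosSemidef) (hρh : ρh.PosSemidef)
    (h1 : ρ.trace = 1) (h2 : ρh.trace = 1) (hne : ρ ≠ ρh) :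
    |vN ρ - vN ρh| ≤
      (1 / 2) * trNorm (ρ - ρh) *
        (1 + Real.log (2 * ((ρ - ρh).rank : ℝ) / trNorm (ρ - ρh))) := by
  have hD : (ρ - ρh).IsHermitian := hρ.1.sub hρh.1
  obtain ⟨P, Q, hP, hQ, hPQ, tP, tQ, rP, rQ, hP1⟩ := jordan ρ ρh hρ hρh hD
  have htn : trNorm (ρ - ρh) = ∑ i, |hD.eigenvalues i| := by
    simp only [trNorm, dif_pos hD]
  have htr : P.trace.re - Q.trace.re = 0 := by
    have := congrArg (fun M => (Matrix.trace M).re) hPQ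
    simp only [Matrix.trace_sub, h1, h2, sub_self, Complex.zero_re, Complex.sub_re] at this
    linarith
  have hsum : P.trace.re + Q.trace.re = trNorm (ρ - ρh) := by
    rw [htn, tP, tQ, ← Finset.sum_add_distrib]
    refine Finset.sum_congr rfl fun i _ => ?_
    rcases le_total 0 (hD.eigenvalues i) with h | h
    · rw [max_eq_left h, max_eq_right (by linarith), abs_of_nonneg h]; ring
    · rw [max_eq_right h, max_eq_left (by linarith), abs_of_nonpos h]; ring
  have hD0 : ρ - ρh ≠ 0 := sub_ne_zero.2 hne
  have hpos : 0 < trNorm (ρ - ρh) := by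
    rw [htn]
    refine lt_of_le_of_ne (Finset.sum_nonneg fun i _ => abs_nonneg _) fun h => hD0 ?_
    rw [← hD.eigenvalues_eq_zero_iff]
    ext i
    have := (Finset.sum_eq_zero_iff_of_nonneg (fun i _ => abs_nonneg _)).1 h.symm i
      (Finset.mem_univ i)
    simpa using this
  have hr : 1 ≤ (ρ - ρh).rank := by
    rw [Nat.one_le_iff_ne_zero]
    intro h
    rw [hD.rank_eq_card_non_zero_eigs, Fintype.card_eq_zero_iff] at h
    refine hD0 (hD.eigenvalues_eq_zero_iff.1 ?_)
    ext i
    by_contra hi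
    exact h.false ⟨i, hi⟩
  have hr' : (1:ℝ) ≤ (ρ - ρh).rank := by exact_mod_cast hr
  rw [h1, Complex.one_re] at hP1
  set N := trNorm (ρ - ρh) with hN
  have hPT : P.trace.re = 1 / 2 * N := by linarith
  have hQT : Q.trace.re = 1 / 2 * N := by linarith
  have hlog : 2 * ((ρ - ρh).rank : ℝ) / N = ((ρ - ρh).rank : ℝ) / (1 / 2 * N) := by
    field_simp
  rw [hlog]
  have hQP : ρh - ρ = Q - P := by rw [← neg_sub, hPQ, neg_sub]
  rw [abs_le]
  have a1 := vN_sub_le ρ ρh P Q hρ hρh hP hQ hPQ h1 h2 (1 / 2 * N) (ρ - ρh).rank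
    (by linarith) (by linarith) hPT rP
  have a2 := vN_sub_le ρh ρ Q P hρh hρ hQ hP hQP h2 h1 (1 / 2 * N) (ρ - ρh).rank
    (by linarith) (by linarith) hQT rQ
  constructor <;> linarith

end Stmt17
end

section
/- Trace subadditivity for the entropy-type function (Lemma A.2). Define F : [0,∞) → [0,∞) by F(x) := x·(1 − ln x) for x ∈ (0,1], F(0) := 0, and F(x) := 1 for x > 1. Then for any two n×n complex positive semidefinite Hermitian matrices A and B: tr F(A+B) ≤ tr F(A) + tr F(B), where for a positive semidefinite Hermitian matrix M, tr F(M) := Σ_i F(λ_i(M)) over the eigenvalues λ_i(M) of M counted with multiplicity. -/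
/-!
Statement 18 (Lemma A.2): trace subadditivity for the entropy-type function.
-/

open scoped ComplexOrder

namespace Stmt18

/-- the entropy-type function `F`. -/
noncomputable def F (x : ℝ) : ℝ :=
  if x ≤ 0 then 0 else if x ≤ 1 then x * (1 - Real.log x) else 1

/-- `tr F(M)` for a Hermitian matrix `M`: the sum of `F` over the eigenvalues. -/
noncomputable def trF {n : Type*} [Fintype n] [DecidableEq n] (M : Matrix n n ℂ) : ℝ :=
  if h : M.IsHermitian then ∑ i, F (h.eigenvalues i) else 0

/-- supporting lines of `F`. -/
lemma F_le_line (c s : ℝ) (hc : 0 ≤ c) (hs : 0 < s) (hs1 : s ≤ 1) :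
    F c ≤ c * (-Real.log s) + s := by
  have hl : Real.log s ≤ 0 := Real.log_nonpos hs.le hs1
  have hl2 := Real.log_le_sub_one_of_pos hs
  unfold F
  split_ifs with h1 h2
  · nlinarith
  · have hc : 0 < c := lt_of_not_ge h1
    have h3 := Real.log_le_sub_one_of_pos (div_pos hs hc)
    rw [Real.log_div hs.ne' hc.ne'] at h3
    have h4 : c * (Real.log s - Real.log c) ≤ c * (s / c - 1) :=
      mul_le_mul_of_nonneg_left h3 hc.le
    have h5 : c * (s / c - 1) = s - c := by field_simp
    nlinarith
  · nlinarith

/-- Jensen for sub-probability weights. -/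
lemma F_jensen {ι : Type*} [Fintype ι] (w c : ι → ℝ) (m : ℝ) (hm : 0 < m)
    (hw : ∀ j, 0 ≤ w j) (hc : ∀ j, 0 ≤ c j) (hw1 : ∑ j, w j ≤ 1)
    (hsum : ∑ j, w j * c j = m) : ∑ j, w j * F (c j) ≤ F m := by
  have key : ∀ s : ℝ, 0 < s → s ≤ 1 → ∑ j, w j * F (c j) ≤ m * (-Real.log s) + s := by
    intro s hs hs1
    calc ∑ j, w j * F (c j) ≤ ∑ j, w j * (c j * (-Real.log s) + s) :=
          Finset.sum_le_sum fun j _ => mul_le_mul_of_nonneg_left (F_le_line _ _ (hc j) hs hs1) (hw j)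
      _ = (∑ j, w j * c j) * (-Real.log s) + (∑ j, w j) * s := by
          rw [Finset.sum_mul, Finset.sum_mul, ← Finset.sum_add_distrib]
          exact Finset.sum_congr rfl fun j _ => by ring
      _ ≤ m * (-Real.log s) + s := by rw [hsum]; nlinarith
  unfold F at key ⊢
  rw [if_neg (not_le.mpr hm)]
  split_ifs with h
  · have := key m hm h
    linarith
  · have := key 1 one_pos le_rfl
    simpa using this

variable {E ι : Type*} [NormedAddCommGroup E] [InnerProductSpace ℂ E] [Fintype ι]

lemma core (u v : OrthonormalBasis ι ℂ E) (a c : ι → ℝ) (ha : ∀ i, 0 ≤ a i) (hc : ∀ i, 0 ≤ c i)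
    (h : ∀ x, ∑ i, a i * ‖inner ℂ (u i) x‖ ^ 2 ≤ ∑ j, c j * ‖inner ℂ (v j) x‖ ^ 2) :
    ∑ j, F (c j) * ((c j)⁻¹ * ∑ i, a i * ‖inner ℂ (u i) (v j)‖ ^ 2) ≤ ∑ i, F (a i) := by
  classical
  have hsw : ∑ j, F (c j) * ((c j)⁻¹ * ∑ i, a i * ‖inner ℂ (u i) (v j)‖ ^ 2)
      = ∑ i, ∑ j, ((c j)⁻¹ * (a i * ‖inner ℂ (u i) (v j)‖ ^ 2)) * F (c j) := by
    rw [Finset.sum_comm]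
    refine Finset.sum_congr rfl fun j _ => ?_
    rw [Finset.mul_sum, Finset.mul_sum]
    exact Finset.sum_congr rfl fun i _ => by ring
  rw [hsw]
  refine Finset.sum_le_sum fun i _ => ?_
  rcases (ha i).eq_or_lt with h0 | hpos
  · simp [← h0, F]
  have hnn : ∀ i j, 0 ≤ a i * ‖inner ℂ (u i) (v j)‖ ^ 2 := fun i j =>
    mul_nonneg (ha i) (sq_nonneg _)
  refine F_jensen _ c (a i) hpos (fun j => mul_nonneg (inv_nonneg.mpr (hc j)) (hnn i j)) hc ?_ ?_
  · set s : ℝ := ∑ j, (c j)⁻¹ * ‖inner ℂ (u i) (v j)‖ ^ 2 with hs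
    have hs0 : 0 ≤ s := Finset.sum_nonneg fun j _ =>
      mul_nonneg (inv_nonneg.mpr (hc j)) (sq_nonneg _)
    let y : E := ∑ j, (((c j)⁻¹ : ℝ) * inner ℂ (v j) (u i) : ℂ) • v j
    have hvy : ∀ j, inner ℂ (v j) y = (((c j)⁻¹ : ℝ) * inner ℂ (v j) (u i) : ℂ) := fun j =>
      v.orthonormal.inner_right_fintype _ j
    have huy : inner ℂ (u i) y = (s : ℂ) := by
      simp only [y, inner_sum, inner_smul_right, hs]
      push_cast
      refine Finset.sum_congr rfl fun j _ => ?_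
      rw [mul_assoc, ← inner_conj_symm (v j) (u i), mul_comm (starRingEnd ℂ _), RCLike.mul_conj]
      simp
    have h1 := h y
    have h2 : ∑ j, c j * ‖inner ℂ (v j) y‖ ^ 2 = s := by
      rw [hs]
      refine Finset.sum_congr rfl fun j _ => ?_
      rw [hvy, norm_mul, Complex.norm_real, norm_inner_symm, mul_pow, Real.norm_eq_abs, sq_abs]
      rcases eq_or_ne (c j) 0 with hz | hz
      · simp [hz]
      · field_simp
    have h3 : a i * s ^ 2 ≤ ∑ k, a k * ‖inner ℂ (u k) y‖ ^ 2 := by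
      have := Finset.single_le_sum (f := fun k => a k * ‖inner ℂ (u k) y‖ ^ 2)
        (fun k _ => mul_nonneg (ha k) (sq_nonneg _)) (Finset.mem_univ i)
      simpa [huy] using this
    have h4 : ∑ j, (c j)⁻¹ * (a i * ‖inner ℂ (u i) (v j)‖ ^ 2) = a i * s := by
      rw [hs, Finset.mul_sum]
      exact Finset.sum_congr rfl fun j _ => by ring
    rw [h4]
    rw [h2] at h1
    by_contra hcon
    push Not at hcon
    have : 0 < s := by
      rcases hs0.eq_or_lt with hz | hz
      · rw [← hz] at hcon; linarith
      · exact hz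
    nlinarith
  · have h1 : ∀ j, (c j)⁻¹ * (a i * ‖inner ℂ (u i) (v j)‖ ^ 2) * c j
        = a i * ‖inner ℂ (u i) (v j)‖ ^ 2 := by
      intro j
      rcases eq_or_ne (c j) 0 with hz | hz
      · have h2 := h (v j)
        have h3 : ∑ k, c k * ‖inner ℂ (v k) (v j)‖ ^ 2 = 0 := by
          refine Finset.sum_eq_zero fun k _ => ?_
          rcases eq_or_ne k j with rfl | hk
          · simp [hz]
          · simp [v.orthonormal.2 hk]
        have h4 := Finset.single_le_sum (f := fun k => a k * ‖inner ℂ (u k) (v j)‖ ^ 2)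
          (fun k _ => hnn k j) (Finset.mem_univ i)
        have h5 := hnn i j
        rw [hz, mul_zero]
        linarith
      · field_simp
    simp only [h1]
    rw [← Finset.mul_sum, v.sum_sq_norm_inner_left, u.norm_eq_one]
    simp

lemma quad {n : ℕ} {A : Matrix (Fin n) (Fin n) ℂ} (hA : A.IsHermitian)
    (x : EuclideanSpace ℂ (Fin n)) :
    ((∑ i, hA.eigenvalues i * ‖inner ℂ (hA.eigenvectorBasis i) x‖ ^ 2 : ℝ) : ℂ)
      = inner ℂ x (Matrix.toEuclideanLin A x) := by
  have hs := Matrix.isSymmetric_toEuclideanLin_iff.mpr hA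
  rw [← hA.eigenvectorBasis.sum_inner_mul_inner x]
  push_cast
  refine Finset.sum_congr rfl fun i _ => ?_
  have h1 : Matrix.toEuclideanLin A (hA.eigenvectorBasis i)
      = (hA.eigenvalues i : ℂ) • hA.eigenvectorBasis i := by
    have := hA.mulVec_eigenvectorBasis i
    ext k
    have := congrFun this k
    simpa [Matrix.toEuclideanLin] using this
  rw [← hs, h1, inner_smul_left, ← inner_conj_symm x]
  rw [mul_left_comm, mul_comm (starRingEnd ℂ (inner ℂ _ _)), RCLike.mul_conj]
  simp

/-- **Lemma A.2**: `tr F(A+B) ≤ tr F(A) + tr F(B)` for positive semidefinite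
Hermitian matrices `A`, `B`. -/
theorem trace_subadditivity {n : ℕ} (A B : Matrix (Fin n) (Fin n) ℂ)
    (hA : A.PosSemidef) (hB : B.PosSemidef) :
    trF (A + B) ≤ trF A + trF B := by
  have hC := hA.add hB
  have hsum : ∀ x, ∑ i, hC.1.eigenvalues i * ‖inner ℂ (hC.1.eigenvectorBasis i) x‖ ^ 2
      = ∑ i, hA.1.eigenvalues i * ‖inner ℂ (hA.1.eigenvectorBasis i) x‖ ^ 2
      + ∑ i, hB.1.eigenvalues i * ‖inner ℂ (hB.1.eigenvectorBasis i) x‖ ^ 2 := by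
    intro x
    apply Complex.ofReal_injective
    rw [Complex.ofReal_add, quad, quad, quad, map_add, LinearMap.add_apply, inner_add_right]
  have nnA : ∀ x, 0 ≤ ∑ i, hA.1.eigenvalues i * ‖inner ℂ (hA.1.eigenvectorBasis i) x‖ ^ 2 :=
    fun x => Finset.sum_nonneg fun i _ => mul_nonneg (hA.eigenvalues_nonneg i) (sq_nonneg _)
  have nnB : ∀ x, 0 ≤ ∑ i, hB.1.eigenvalues i * ‖inner ℂ (hB.1.eigenvectorBasis i) x‖ ^ 2 :=
    fun x => Finset.sum_nonneg fun i _ => mul_nonneg (hB.eigenvalues_nonneg i) (sq_nonneg _)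
  have cA := core hA.1.eigenvectorBasis hC.1.eigenvectorBasis _ _ hA.eigenvalues_nonneg
    hC.eigenvalues_nonneg (fun x => by rw [hsum]; linarith [nnB x])
  have cB := core hB.1.eigenvectorBasis hC.1.eigenvectorBasis _ _ hB.eigenvalues_nonneg
    hC.eigenvalues_nonneg (fun x => by rw [hsum]; linarith [nnA x])
  rw [trF, trF, trF, dif_pos hA.1, dif_pos hB.1, dif_pos hC.1]
  refine le_trans (le_of_eq ?_) (add_le_add cA cB)
  rw [← Finset.sum_add_distrib]
  refine Finset.sum_congr rfl fun j _ => ?_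
  rw [← mul_add, ← mul_add, ← hsum]
  have h3 : ∑ k, hC.1.eigenvalues k *
      ‖inner ℂ (hC.1.eigenvectorBasis k) (hC.1.eigenvectorBasis j)‖ ^ 2 = hC.1.eigenvalues j := by
    rw [Finset.sum_eq_single j]
    · simp
    · intro k _ hk
      simp [hC.1.eigenvectorBasis.orthonormal.2 hk]
    · simp
  rw [h3]
  rcases eq_or_ne (hC.1.eigenvalues j) 0 with hz | hz
  · simp [hz, F]
  · rw [inv_mul_cancel₀ hz, mul_one]

end Stmt18
end

section
/- Concave trace inequality (Remark following Lemma A.2, inequality (A.4)). Let F : [0,∞) → [0,∞) be nondecreasing and concave. Then for any two N×N complex positive semidefinite Hermitian matrices A and B: tr F(A+B) ≤ tr F(A) + N·F( tr(B)/N ), where for a positive semidefinite Hermitian matrix M, tr F(M) := Σ_i F(λ_i(M)) over the eigenvalues λ_i(M) of M counted with multiplicity. -/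
/-!
Statement 19 (inequality (A.4)): concave trace inequality.
-/

open scoped ComplexOrder

namespace Stmt19

/-- `tr F(M)` for a Hermitian matrix `M`: the sum of `F` over the eigenvalues. -/
noncomputable def trF {n : Type*} [Fintype n] [DecidableEq n]
    (F : ℝ → ℝ) (M : Matrix n n ℂ) : ℝ :=
  if h : M.IsHermitian then ∑ i, F (h.eigenvalues i) else 0

open Matrix in
/-- Quadratic form of a Hermitian matrix in its eigenbasis. -/
lemma quad_form {N : ℕ} {A : Matrix (Fin N) (Fin N) ℂ} (hA : A.IsHermitian)
    (x : EuclideanSpace ℂ (Fin N)) :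
    (inner ℂ x (toEuclideanLin A x)).re
      = ∑ i, hA.eigenvalues i * ‖inner ℂ (hA.eigenvectorBasis i) x‖ ^ 2 := by
  have hs := isSymmetric_toEuclideanLin_iff.mpr hA
  have he : ∀ i, toEuclideanLin A (hA.eigenvectorBasis i)
      = (hA.eigenvalues i : ℂ) • hA.eigenvectorBasis i := by
    intro i
    have h := hA.mulVec_eigenvectorBasis i
    ext j
    have := congrFun h j
    simpa [toLpLin_apply] using this
  rw [← hA.eigenvectorBasis.sum_inner_mul_inner x, Complex.re_sum]
  refine Finset.sum_congr rfl fun i _ => ?_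
  rw [← hs, he, inner_smul_left, ← inner_conj_symm x]
  rw [Complex.conj_ofReal, mul_left_comm, ← Complex.normSq_eq_conj_mul_self,
    Complex.normSq_eq_norm_sq, ← Complex.ofReal_mul, Complex.ofReal_re]

open Matrix in
/-- Weyl monotonicity. -/
lemma weyl {N : ℕ} {A B : Matrix (Fin N) (Fin N) ℂ} (hA : A.IsHermitian)
    (hB : B.PosSemidef) (hC : (A + B).IsHermitian) (k : Fin N) :
    hA.eigenvalues k ≤ hC.eigenvalues k := by
  obtain ⟨e, hae, hce⟩ : ∃ e : Fin N → Fin (Fintype.card (Fin N)),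
      (∀ i j, e i ≤ e j → hA.eigenvalues j ≤ hA.eigenvalues i) ∧
      (∀ i j, e i ≤ e j → hC.eigenvalues j ≤ hC.eigenvalues i) :=
    ⟨fun i => (Fintype.equivOfCardEq (Fintype.card_fin _)).symm i,
      fun i j h => hA.eigenvalues₀_antitone h, fun i j h => hC.eigenvalues₀_antitone h⟩
  let f : EuclideanSpace ℂ (Fin N) →ₗ[ℂ] ({i : Fin N // i ≠ k} → ℂ) :=
    LinearMap.pi fun i => if e k < e i then (innerSL ℂ (hA.eigenvectorBasis i)).toLinearMap
      else (innerSL ℂ (hC.eigenvectorBasis i)).toLinearMap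
  have hf : LinearMap.ker f ≠ ⊥ := f.ker_ne_bot_of_finrank_lt (by
    have : 0 < N := k.pos
    simp [Fintype.card_subtype_compl]
    try omega)
  obtain ⟨x, hx, hx0⟩ := (Submodule.ne_bot_iff _).mp hf
  have hfx : ∀ i, i ≠ k → (if e k < e i then (innerSL ℂ (hA.eigenvectorBasis i)).toLinearMap
      else (innerSL ℂ (hC.eigenvectorBasis i)).toLinearMap) x = 0 := fun i hi =>
    congrFun (LinearMap.mem_ker.mp hx) ⟨i, hi⟩
  have h1 : hA.eigenvalues k * ‖x‖ ^ 2 ≤ (inner ℂ x (toEuclideanLin A x)).re := by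
    rw [quad_form hA, ← hA.eigenvectorBasis.sum_sq_norm_inner_right x, Finset.mul_sum]
    refine Finset.sum_le_sum fun i _ => ?_
    by_cases h : e k < e i
    · have := hfx i (by rintro rfl; exact lt_irrefl _ h)
      rw [if_pos h] at this
      have h' : inner ℂ (hA.eigenvectorBasis i) x = 0 := this
      simp [h']
    · exact mul_le_mul_of_nonneg_right (hae _ _ (not_lt.mp h)) (by positivity)
  have h2 : (inner ℂ x (toEuclideanLin (A + B) x)).re ≤ hC.eigenvalues k * ‖x‖ ^ 2 := by
    rw [quad_form hC, ← hC.eigenvectorBasis.sum_sq_norm_inner_right x, Finset.mul_sum]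
    refine Finset.sum_le_sum fun i _ => ?_
    by_cases h : i = k
    · rw [h]
    by_cases h' : e k < e i
    · exact mul_le_mul_of_nonneg_right (hce _ _ h'.le) (by positivity)
    · have := hfx i h
      rw [if_neg h'] at this
      have h' : inner ℂ (hC.eigenvectorBasis i) x = 0 := this
      simp [h']
  have h3 : 0 ≤ (inner ℂ x (toEuclideanLin B x)).re := by
    rw [quad_form hB.1]
    exact Finset.sum_nonneg fun i _ => mul_nonneg (hB.eigenvalues_nonneg i) (by positivity)
  rw [map_add, LinearMap.add_apply, inner_add_right, Complex.add_re] at h2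
  have : 0 < ‖x‖ ^ 2 := by positivity
  nlinarith

lemma subadd {F : ℝ → ℝ} (hconc : ConcaveOn ℝ (Set.Ici (0 : ℝ)) F) (h0 : 0 ≤ F 0)
    {a d : ℝ} (ha : 0 ≤ a) (hd : 0 ≤ d) : F (a + d) ≤ F a + F d := by
  rcases (add_nonneg ha hd).eq_or_lt with h | h
  · have h1 : a = 0 := by linarith
    have h2 : d = 0 := by linarith
    simp [h1, h2, h0]
  have hs : a / (a + d) + d / (a + d) = 1 := by field_simp
  have p1 : 0 ≤ a / (a + d) := by positivity
  have p2 : 0 ≤ d / (a + d) := by positivity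
  have e1 := hconc.2 (Set.mem_Ici.2 h.le) (Set.mem_Ici.2 le_rfl) p1 p2 hs
  have e2 := hconc.2 (Set.mem_Ici.2 le_rfl) (Set.mem_Ici.2 h.le) p1 p2 hs
  simp only [smul_eq_mul, mul_zero, add_zero, zero_add] at e1 e2
  rw [div_mul_cancel₀ _ h.ne'] at e1 e2
  have : (a / (a + d) + d / (a + d)) * F (a + d) = F (a + d) := by rw [hs, one_mul]
  nlinarith [mul_nonneg p1 h0, mul_nonneg p2 h0]

/-- **Inequality (A.4)**: for nondecreasing, concave `F : [0,∞) → [0,∞)` and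
positive semidefinite Hermitian `N×N` matrices `A`, `B`,
`tr F(A+B) ≤ tr F(A) + N·F(tr(B)/N)`. -/
theorem concave_trace_inequality {N : ℕ} (F : ℝ → ℝ)
    (hmono : MonotoneOn F (Set.Ici (0 : ℝ)))
    (hconc : ConcaveOn ℝ (Set.Ici (0 : ℝ)) F)
    (hpos : ∀ x : ℝ, 0 ≤ x → 0 ≤ F x)
    (A B : Matrix (Fin N) (Fin N) ℂ)
    (hA : A.PosSemidef) (hB : B.PosSemidef) :
    trF F (A + B) ≤ trF F A + N * F (B.trace.re / N) := by
  have hC := (hA.add hB).1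
  rw [trF, trF, dif_pos hC, dif_pos hA.1]
  rcases Nat.eq_zero_or_pos N with rfl | hN
  · simp
  have hN' : (0 : ℝ) < N := by exact_mod_cast hN
  have hd : ∀ i, 0 ≤ hC.eigenvalues i - hA.1.eigenvalues i := fun i =>
    sub_nonneg.2 (weyl hA.1 hB hC i)
  have htr : B.trace.re = ∑ i, (hC.eigenvalues i - hA.1.eigenvalues i) := by
    have h1 := congrArg Complex.re hC.trace_eq_sum_eigenvalues
    have h2 := congrArg Complex.re hA.1.trace_eq_sum_eigenvalues
    rw [Matrix.trace_add] at h1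
    simp only [Complex.add_re, Complex.re_sum, Complex.coe_algebraMap, RCLike.ofReal_eq_complex_ofReal, Complex.ofReal_re] at h1 h2
    rw [Finset.sum_sub_distrib]
    linarith
  have hJ := hconc.le_map_sum (t := Finset.univ) (w := fun _ : Fin N => (N : ℝ)⁻¹)
    (p := fun i => hC.eigenvalues i - hA.1.eigenvalues i) (fun _ _ => by positivity)
    (by simp [hN'.ne']) (fun i _ => hd i)
  simp only [smul_eq_mul, ← Finset.mul_sum] at hJ
  rw [← htr, inv_mul_le_iff₀ hN', inv_mul_eq_div] at hJ
  calc ∑ i, F (hC.eigenvalues i)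
      ≤ ∑ i, (F (hA.1.eigenvalues i) + F (hC.eigenvalues i - hA.1.eigenvalues i)) := by
        refine Finset.sum_le_sum fun i _ => ?_
        have := subadd hconc (hpos 0 le_rfl) (hA.eigenvalues_nonneg i) (hd i)
        rwa [add_sub_cancel] at this
    _ ≤ _ := by rw [Finset.sum_add_distrib]; linarith

end Stmt19
end
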